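/- arXiv:1404.6939 — 7 statements merged into one kernel-verified Lean document; each statement's English description precedes it below -/
import Mathlib

section
/- Let (R,𝔪) be a Noetherian local ring and let a finite group G act on R by ring automorphisms, with |G| invertible in R. Then for every ideal I of the invariant ring R^G one has IR ∩ R^G = I; consequently R^G is a Noetherian ring, and R^G is a local ring with maximal ideal 𝔫 = 𝔪 ∩ R^G. -/
/-- The subring of invariants `R^G` of a ring `R` under an action of a group `G`
by ring automorphisms. -/
def fixedSubring (G R : Type*) [Group G] [CommRing R] [MulSemiringAction G R] :
    Subring R where
  carrier := {x | ∀ σ : G, σ • x = x}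
  mul_mem' := by intro a b ha hb σ; rw [smul_mul', ha σ, hb σ]
  one_mem' := by intro σ; exact smul_one σ
  add_mem' := by intro a b ha hb σ; rw [smul_add, ha σ, hb σ]
  zero_mem' := by intro σ; exact smul_zero σ
  neg_mem' := by intro a ha σ; rw [smul_neg, ha σ]

/-!
Averaging over `G` is an `R^G`-linear retraction of the inclusion `R^G → R`. It maps `IR` into `I`
and fixes `R^G`, so `IR ∩ R^G = I`; hence `I ↦ IR` embeds the ideals of `R^G` into those of `R`,
and the ascending chain condition descends. Locality comes from the uniqueness of inverses: the
inverse of an invariant unit is invariant.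
-/

theorem comap_map_algebraMap_eq_of_retraction {A B : Type*} [CommSemiring A] [CommSemiring B]
    [Algebra A B] (ρ : B →ₗ[A] A) (hρ : ∀ a, ρ (algebraMap A B a) = a) (I : Ideal A) :
    (I.map (algebraMap A B)).comap (algebraMap A B) = I := by
  have hρI : ((I.map (algebraMap A B)).restrictScalars A).map ρ ≤ I := calc
    _ = I • (⊤ : Submodule A B).map ρ := by rw [← Ideal.smul_top_eq_map, Submodule.map_smul'']
    _ ≤ I := Submodule.smul_le.2 fun _ hr a _ ↦ I.mul_mem_right a hr
  refine le_antisymm (fun a ha ↦ ?_) Ideal.le_comap_map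
  rw [← hρ a]
  exact hρI (Submodule.mem_map_of_mem ha)

theorem isNoetherianRing_of_idealMap_injective {A B : Type*} [Semiring A] [Semiring B]
    [IsNoetherianRing B] (f : A →+* B) (hf : Function.Injective (Ideal.map f)) :
    IsNoetherianRing A := by
  have hmono : StrictMono (Ideal.map f) :=
    Monotone.strictMono_of_injective (fun _ _ ↦ Ideal.map_mono) hf
  rw [isNoetherianRing_iff, isNoetherian_iff']
  exact hmono.wellFoundedGT

namespace fixedSubring

variable {G R : Type*} [Group G] [CommRing R] [MulSemiringAction G R]

theorem smul_coe (σ : G) (a : fixedSubring G R) : σ • (a : R) = a :=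
  a.2 σ

instance : SMulCommClass G (fixedSubring G R) R where
  smul_comm σ a x := by
    rw [Subring.smul_def, Subring.smul_def, smul_eq_mul, smul_eq_mul, smul_mul', smul_coe]

instance isLocalHom_subtype : IsLocalHom (fixedSubring G R).subtype where
  map_nonunit a ha := by
    obtain ⟨b, hab : (a : R) * b = 1⟩ := ha.exists_right_inv
    have hb : b ∈ fixedSubring G R := fun σ ↦ ha.mul_left_cancel <| calc
      (a : R) * σ • b = σ • ((a : R) * b) := by rw [smul_mul', smul_coe]
      _ = (a : R) * b := by rw [hab, smul_one]
    exact .of_mul_eq_one ⟨b, hb⟩ (Subtype.ext hab)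

variable [Fintype G]

/-- The trace `x ↦ ∑ σ, σ • x` of the action of `G` on `R`, as an `R^G`-linear map into `R^G`. -/
def trace : R →ₗ[fixedSubring G R] fixedSubring G R where
  toFun x := ⟨∑ σ : G, σ • x, fun τ ↦ by
    simp only [Finset.smul_sum, smul_smul]
    exact Fintype.sum_equiv (Equiv.mulLeft τ) _ _ fun _ ↦ rfl⟩
  map_add' x y := Subtype.ext <| by
    simp only [smul_add, Finset.sum_add_distrib, Subring.coe_add]
  map_smul' a x := Subtype.ext <| by
    simp only [smul_comm _ a x, ← Finset.smul_sum]
    rfl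

theorem trace_coe (a : fixedSubring G R) : trace (G := G) (a : R) = Fintype.card G * a :=
  Subtype.ext <| calc
    ∑ σ : G, σ • (a : R) = Fintype.card G • (a : R) := by
      simp only [smul_coe, Finset.sum_const, Finset.card_univ]
    _ = ((Fintype.card G * a : fixedSubring G R) : R) := by
      rw [nsmul_eq_mul, Subring.coe_mul, Subring.coe_natCast]

/-- The Reynolds operator `x ↦ |G|⁻¹ ∑ σ, σ • x`. The inverse of `|G|` is taken in `R^G` so that the
operator is visibly an `R^G`-multiple of the trace. -/
def reynolds [Invertible (Fintype.card G : fixedSubring G R)] :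
    R →ₗ[fixedSubring G R] fixedSubring G R :=
  ⅟(Fintype.card G : fixedSubring G R) • trace

theorem reynolds_coe [Invertible (Fintype.card G : fixedSubring G R)] (a : fixedSubring G R) :
    reynolds (G := G) (a : R) = a := by
  rw [reynolds, LinearMap.smul_apply, trace_coe, smul_eq_mul, invOf_mul_cancel_left]

theorem comap_map_subtype_eq (hG : IsUnit (Fintype.card G : R)) (I : Ideal (fixedSubring G R)) :
    (I.map (fixedSubring G R).subtype).comap (fixedSubring G R).subtype = I := by
  have hcard : IsUnit (Fintype.card G : fixedSubring G R) :=
    IsUnit.of_map (fixedSubring G R).subtype _ (by rwa [map_natCast])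
  let := hcard.invertible
  exact comap_map_algebraMap_eq_of_retraction reynolds reynolds_coe I

end fixedSubring

/-- Let `(R,𝔪)` be a Noetherian local ring with a finite group `G` acting by ring
automorphisms, `|G|` invertible in `R`.  Then `IR ∩ R^G = I` for every ideal `I` of
`R^G`; consequently `R^G` is Noetherian and local with maximal ideal `𝔫 = 𝔪 ∩ R^G`. -/
theorem ideal_contraction_noetherian_local_of_invariants
    (R : Type) [CommRing R] [IsNoetherianRing R] [IsLocalRing R]
    (G : Type) [Group G] [Fintype G] [MulSemiringAction G R]
    (hG : IsUnit ((Fintype.card G : R))) :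
    (∀ I : Ideal (fixedSubring G R),
        Ideal.comap (fixedSubring G R).subtype
          (Ideal.map (fixedSubring G R).subtype I) = I) ∧
    IsNoetherianRing (fixedSubring G R) ∧
    ∃ h : IsLocalRing (fixedSubring G R),
      @IsLocalRing.maximalIdeal (fixedSubring G R) _ h =
        Ideal.comap (fixedSubring G R).subtype (IsLocalRing.maximalIdeal R) := by
  have hcontr := fixedSubring.comap_map_subtype_eq hG
  have hlocal := (fixedSubring G R).subtype.domain_isLocalRing
  exact ⟨hcontr,
    isNoetherianRing_of_idealMap_injective _ (Function.LeftInverse.injective hcontr),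
    hlocal, (IsLocalRing.maximalIdeal_comap (fixedSubring G R).subtype).symm⟩
end

section
/- Let (R,𝔪) be a Noetherian local ring and let a finite group G act on R by ring automorphisms, with |G| invertible in R. If R is complete with respect to the 𝔪-adic topology, then the invariant ring R^G is complete with respect to the 𝔫-adic topology, where 𝔫 = 𝔪 ∩ R^G. -/
/-!
Let `A = B^G` and `n = I ∩ A`. Each `b ∈ I` is a root of `∏ g, (X - g • b)`, whose non-leading
coefficients lie in `n`, so some power of `b` lies in `nB`. As `I` is finitely generated, the
`I`-adic and `nB`-adic topologies of `B` agree, and so `B` is `n`-adically complete as an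
`A`-module. If `c` has trace `1` (for instance `c = 1 / |G|`), then `b ↦ ∑ g, g • (c * b)` is an
`A`-linear retraction of `A → B`, and completeness passes to retracts.
-/

open Polynomial

section AdicComplete

variable {R M N : Type*} [CommRing R] [AddCommGroup M] [Module R M] [AddCommGroup N] [Module R N]
  {I J : Ideal R}

theorem isPrecomplete_of_pow_le_of_le [IsPrecomplete I M] {k : ℕ} (hIJ : I ^ k ≤ J) (hJI : J ≤ I) :
    IsPrecomplete J M := by
  have pow_smul_le {K L : Ideal R} (h : K ≤ L) (n : ℕ) :
      (K ^ n • ⊤ : Submodule R M) ≤ L ^ n • ⊤ :=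
    Submodule.smul_mono_left (Ideal.pow_right_mono h n)
  refine ⟨fun f hf ↦ ?_⟩
  obtain ⟨L, hL⟩ := IsPrecomplete.prec ‹IsPrecomplete I M› fun hmn ↦
    (hf hmn).mono (pow_smul_le hJI _)
  refine ⟨L, fun n ↦ ?_⟩
  have hpow : (I ^ (n + k * n) • ⊤ : Submodule R M) ≤ J ^ n • ⊤ :=
    (Submodule.pow_smul_top_le I M (Nat.le_add_left _ _)).trans (pow_mul I k n ▸ pow_smul_le hIJ n)
  exact (hf (Nat.le_add_right n (k * n))).trans ((hL _).mono hpow)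

theorem isAdicComplete_of_pow_le_of_le [IsAdicComplete I M] {k : ℕ} (hIJ : I ^ k ≤ J)
    (hJI : J ≤ I) : IsAdicComplete J M where
  toIsHausdorff := .of_map (J := I) (by simpa using hJI)
  toIsPrecomplete := isPrecomplete_of_pow_le_of_le hIJ hJI

theorem isHausdorff_of_injective [IsHausdorff I N] {i : M →ₗ[R] N} (hi : Function.Injective i) :
    IsHausdorff I M where
  haus' x hx := (map_eq_zero_iff i hi).mp <| IsHausdorff.haus ‹_› (i x) fun n ↦ by
    rw [← map_zero i]
    exact ((hx n).map i).mono
      (Submodule.map_le_iff_le_comap.mpr (Submodule.smul_top_le_comap_smul_top _ i))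

theorem isPrecomplete_of_surjective [IsPrecomplete I N] {r : N →ₗ[R] M}
    (hr : Function.Surjective r) : IsPrecomplete I M := by
  have hcomp : AdicCompletion.of I M ∘ r = AdicCompletion.map I r ∘ AdicCompletion.of I N :=
    funext fun x ↦ (AdicCompletion.map_of I r x).symm
  refine AdicCompletion.of_surjective_iff.mp (.of_comp (g := r) ?_)
  exact hcomp ▸ (AdicCompletion.map_surjective I hr).comp (AdicCompletion.of_surjective I N)

theorem isAdicComplete_of_leftInverse [IsAdicComplete I N] {i : M →ₗ[R] N} {r : N →ₗ[R] M}
    (h : Function.LeftInverse r i) : IsAdicComplete I M where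
  toIsHausdorff := isHausdorff_of_injective h.injective
  toIsPrecomplete := isPrecomplete_of_surjective h.surjective

end AdicComplete

section Distinguished

variable {B : Type*} [CommRing B] {I : Ideal B}

theorem isDistinguishedAt_one : (1 : B[X]).IsDistinguishedAt I where
  mem hn := by simp at hn
  monic := monic_one

theorem isDistinguishedAt_X_sub_C {b : B} (hb : b ∈ I) : (X - C b).IsDistinguishedAt I where
  mem hn := by
    obtain rfl := Nat.lt_one_iff.mp (hn.trans_le (natDegree_X_sub_C_le b))
    simpa using hb
  monic := monic_X_sub_C b

theorem isDistinguishedAt_charpoly {G : Type*} [Group G] [Fintype G] [MulSemiringAction G B] {b : B}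
    (hb : ∀ g : G, g • b ∈ I) : (MulSemiringAction.charpoly G b).IsDistinguishedAt I :=
  Finset.prod_induction _ (IsDistinguishedAt · I) (fun _ _ ↦ IsDistinguishedAt.mul)
    isDistinguishedAt_one fun g _ ↦ isDistinguishedAt_X_sub_C (hb g)

end Distinguished

section Invariants

variable {A B G : Type*} [CommRing A] [CommRing B] [Algebra A B]
  [Group G] [MulSemiringAction G B]

section Radical

variable [Finite G] [Algebra.IsInvariant A B G] {I : Ideal B}

variable (A) in
theorem le_radical_map_under (hI : ∀ g : G, ∀ b ∈ I, g • b ∈ I) :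
    I ≤ ((I.under A).map (algebraMap A B)).radical := by
  intro b hb
  cases nonempty_fintype G
  obtain ⟨p, hp, hdeg, hmonic⟩ := lifts_and_natDegree_eq_and_monic
    (Algebra.IsInvariant.charpoly_mem_lifts A B G b) (MulSemiringAction.monic_charpoly G b)
  have hroot : aeval b p = 0 := by
    rw [← eval_map_algebraMap, hp, MulSemiringAction.eval_charpoly]
  have hEis : p.IsWeaklyEisensteinAt (I.under A) := ⟨fun {n} hn ↦ by
    rw [Ideal.mem_comap, ← coeff_map, hp]
    exact (isDistinguishedAt_charpoly fun g ↦ hI g b hb).mem (hdeg ▸ hn)⟩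
  exact ⟨_, hEis.pow_natDegree_le_of_aeval_zero_of_monic_mem_map hroot hmonic _ le_rfl⟩

variable (A) in
theorem exists_pow_le_map_under (hfg : I.FG) (hI : ∀ g : G, ∀ b ∈ I, g • b ∈ I) :
    ∃ k, I ^ k ≤ (I.under A).map (algebraMap A B) :=
  Ideal.exists_pow_le_of_le_radical_of_fg (le_radical_map_under A hI) hfg

end Radical

section Trace

variable [Fintype G] [SMulCommClass G A B] [FaithfulSMul A B] [Algebra.IsInvariant A B G]

variable (A B G) in
/-- The trace `b ↦ ∑ g, g • b` of a finite group action, as a map into the ring `A` of invariants: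
each sum is fixed by `G`, hence comes from a unique element of `A`. It is used to build `A`-linear
retractions of `A → B`. -/
noncomputable def invariantTrace : B →ₗ[A] A :=
  LinearMap.codRestrictOfInjective (∑ g : G, DistribSMul.toLinearMap A B g)
    (Algebra.linearMap A B) (FaithfulSMul.algebraMap_injective A B) fun b ↦
    Algebra.IsInvariant.isInvariant (G := G) _ fun h ↦ by
      simpa [Finset.smul_sum, smul_smul] using
        Equiv.sum_comp (Equiv.mulLeft h) fun g ↦ g • b

theorem algebraMap_invariantTrace (b : B) :
    algebraMap A B (invariantTrace A B G b) = ∑ g : G, g • b :=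
  (LinearMap.codRestrictOfInjective_comp_apply _ (Algebra.linearMap A B) _ _ b).trans
    (LinearMap.sum_apply _ _ b)

theorem leftInverse_invariantTrace_mul {c : B} (hc : ∑ g : G, g • c = 1) :
    Function.LeftInverse (invariantTrace A B G ∘ₗ LinearMap.mulLeft A c) (Algebra.linearMap A B) :=
  fun a ↦ FaithfulSMul.algebraMap_injective A B <| by
    simp [algebraMap_invariantTrace, smul_mul', smul_algebraMap, ← Finset.sum_mul, hc]

end Trace

theorem invariants_complete_of_complete_general [Fintype G] [SMulCommClass G A B] [FaithfulSMul A B]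
    [Algebra.IsInvariant A B G] {I : Ideal B} [IsAdicComplete I B] (hfg : I.FG)
    (hI : ∀ g : G, ∀ b ∈ I, g • b ∈ I) (htr : ∃ c : B, ∑ g : G, g • c = 1) :
    IsAdicComplete (I.under A) A := by
  obtain ⟨k, hk⟩ := exists_pow_le_map_under A hfg hI
  obtain ⟨c, hc⟩ := htr
  have hmap : IsAdicComplete ((I.under A).map (algebraMap A B)) B :=
    isAdicComplete_of_pow_le_of_le hk Ideal.map_comap_le
  have : IsAdicComplete (I.under A) B := (IsAdicComplete.map_algebraMap_iff _ _).mp hmap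
  exact isAdicComplete_of_leftInverse (leftInverse_invariantTrace_mul hc)

end Invariants

theorem exists_sum_smul_eq_one_of_isUnit_card {B G : Type*} [CommRing B] [Group G] [Fintype G]
    [MulSemiringAction G B] (hG : IsUnit (Fintype.card G : B)) :
    ∃ c : B, ∑ g : G, g • c = 1 := by
  obtain ⟨u, hu⟩ := hG.exists_right_inv
  have hfix (g : G) : g • u = u := hG.mul_left_cancel <| by
    have hcard : g • (Fintype.card G : B) = Fintype.card G :=
      map_natCast (MulSemiringAction.toRingHom G B g) _
    rw [hu]
    simpa only [smul_mul', smul_one, hcard] using congr(g • $hu)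
  exact ⟨u, by simp [hfix, hu]⟩

theorem smul_mem_maximalIdeal {G R : Type*} [Group G] [CommRing R] [IsLocalRing R]
    [MulSemiringAction G R] (g : G) {x : R} (hx : x ∈ IsLocalRing.maximalIdeal R) :
    g • x ∈ IsLocalRing.maximalIdeal R :=
  (map_mem_nonunits_iff (MulSemiringAction.toRingEquiv G R g) x).mpr hx

section FixedSubring

variable {G R : Type*} [Group G] [CommRing R] [MulSemiringAction G R]

instance fixedSubring.smulCommClass : SMulCommClass G (fixedSubring G R) R where
  smul_comm g a x := by simp [Subring.smul_def, smul_mul', a.2 g]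

instance fixedSubring.isInvariant : Algebra.IsInvariant (fixedSubring G R) R G where
  isInvariant b hb := ⟨⟨b, hb⟩, rfl⟩

end FixedSubring

/-- If `R` is a Noetherian local ring, complete in the `𝔪`-adic topology, with a finite
group `G` acting by ring automorphisms and `|G|` invertible in `R`, then `R^G` is
complete in the `𝔫`-adic topology, where `𝔫 = 𝔪 ∩ R^G`. -/
theorem invariants_complete_of_complete
    (R : Type) [CommRing R] [IsNoetherianRing R] [IsLocalRing R]
    [IsAdicComplete (IsLocalRing.maximalIdeal R) R]
    (G : Type) [Group G] [Fintype G] [MulSemiringAction G R]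
    (hG : IsUnit ((Fintype.card G : R))) :
    IsAdicComplete
      (Ideal.comap (fixedSubring G R).subtype (IsLocalRing.maximalIdeal R))
      (fixedSubring G R) := by
  exact invariants_complete_of_complete_general (IsNoetherian.noetherian _)
    (fun g _ ↦ smul_mem_maximalIdeal g) (exists_sum_smul_eq_one_of_isUnit_card hG)
end

section
/- Let (R,𝔪) be a Noetherian local ring and let a finite group G act on R by ring automorphisms, with |G| invertible in R. The G-action on R induces a G-action on the residue field k = R/𝔪; let k^G denote the fixed field of this action. Then the image of the natural ring map i: R^G/𝔫 → R/𝔪 (where 𝔫 = 𝔪 ∩ R^G) is exactly k^G. -/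
/-!
If `t ∈ R ⧸ I` is fixed by `G` and `n = |G|` is invertible in `R ⧸ I`, then `t / n` is fixed too.
For any lift `x` of `t / n`, the orbit sum `∑ σ • x` is invariant, and it lifts `n • (t / n) = t`
because each of its `n` terms lifts `t / n`.
-/

section AdditiveActions

variable {G M N : Type*} [Group G] [Fintype G] [AddCommMonoid M] [DistribMulAction G M]

theorem sum_smul_mem_fixedPoints (x : M) : ∑ τ : G, τ • x ∈ MulAction.fixedPoints G M := by
  intro σ
  calc σ • ∑ τ : G, τ • x = ∑ τ : G, (σ * τ) • x := by simp only [Finset.smul_sum, smul_smul]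
    _ = ∑ τ : G, τ • x := Equiv.sum_comp (Equiv.mulLeft σ) fun τ : G ↦ τ • x

theorem exists_mem_fixedPoints_map_eq [AddCommMonoid N] (f : M →+ N) (hf : Function.Surjective f)
    (hcard : Function.Bijective fun y : N ↦ Fintype.card G • y) {t : N}
    (ht : ∀ (σ : G) (x : M), f x = t → f (σ • x) = t) :
    ∃ x ∈ MulAction.fixedPoints G M, f x = t := by
  obtain ⟨s, hs : Fintype.card G • s = t⟩ := hcard.surjective t
  obtain ⟨x, rfl⟩ := hf s
  have map_smul_eq (σ : G) : f (σ • x) = f x := by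
    refine hcard.injective ?_
    calc Fintype.card G • f (σ • x) = f (σ • Fintype.card G • x) := by
          rw [smul_comm, map_nsmul]
      _ = t := ht σ _ ((map_nsmul f _ x).trans hs)
      _ = Fintype.card G • f x := hs.symm
  refine ⟨∑ τ : G, τ • x, sum_smul_mem_fixedPoints x, ?_⟩
  calc f (∑ τ : G, τ • x) = ∑ _τ : G, f x := by simp only [map_sum, map_smul_eq]
    _ = Fintype.card G • f x := by rw [Finset.sum_const, Finset.card_univ]
    _ = t := hs

end AdditiveActions

theorem smul_mem_maximalIdeal_iff {G R : Type*} [Group G] [CommSemiring R] [IsLocalRing R]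
    [MulSemiringAction G R] (σ : G) {x : R} :
    σ • x ∈ IsLocalRing.maximalIdeal R ↔ x ∈ IsLocalRing.maximalIdeal R :=
  (MulEquiv.isUnit_map (MulSemiringAction.toRingEquiv G R σ)).not

theorem mk_smul_eq_of_mk_eq {G R : Type*} [Monoid G] [Ring R] [DistribMulAction G R]
    {I : Ideal R} [I.IsTwoSided] {σ : G} (hI : ∀ x ∈ I, σ • x ∈ I) {x y : R} (hy : σ • y = y)
    (hxy : Ideal.Quotient.mk I x = Ideal.Quotient.mk I y) :
    Ideal.Quotient.mk I (σ • x) = Ideal.Quotient.mk I y := by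
  rw [Ideal.Quotient.eq] at hxy ⊢
  simpa only [smul_sub, hy] using hI _ hxy

theorem image_of_invariants_in_residue_field_eq_fixed_field_general
    {G R : Type*} [Group G] [Fintype G] [CommRing R] [MulSemiringAction G R]
    (I : Ideal R) (hI : ∀ (σ : G), ∀ x ∈ I, σ • x ∈ I)
    (hG : IsUnit (Fintype.card G : R ⧸ I)) :
    Set.range ⇑((Ideal.Quotient.mk I).comp (fixedSubring G R).subtype) =
      {t : R ⧸ I | ∀ (σ : G) (x : R),
        Ideal.Quotient.mk I x = t → Ideal.Quotient.mk I (σ • x) = t} := by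
  refine Set.Subset.antisymm ?_ fun t ht ↦ ?_
  · rintro _ ⟨y, rfl⟩ σ x hx
    exact mk_smul_eq_of_mk_eq (hI σ) (y.2 σ) hx
  · have hcard : Function.Bijective fun s : R ⧸ I ↦ Fintype.card G • s := by
      simpa only [nsmul_eq_mul] using IsUnit.isUnit_iff_mulLeft_bijective.mp hG
    obtain ⟨y, hy, hyt⟩ := exists_mem_fixedPoints_map_eq (Ideal.Quotient.mk I).toAddMonoidHom
      Ideal.Quotient.mk_surjective hcard ht
    exact ⟨⟨y, hy⟩, hyt⟩

/-- The image of the natural map `i : R^G/𝔫 → R/𝔪` is exactly the fixed field `k^G`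
of the induced `G`-action on `k = R/𝔪`.  (Here an element `t ∈ R/𝔪` is fixed by the
induced action of `σ ∈ G` iff `σ • x` represents `t` whenever `x` represents `t`.) -/
theorem image_of_invariants_in_residue_field_eq_fixed_field
    (R : Type) [CommRing R] [IsNoetherianRing R] [IsLocalRing R]
    (G : Type) [Group G] [Fintype G] [MulSemiringAction G R]
    (hG : IsUnit ((Fintype.card G : R))) :
    Set.range ⇑((Ideal.Quotient.mk (IsLocalRing.maximalIdeal R)).comp
        (fixedSubring G R).subtype) =
      {t : R ⧸ IsLocalRing.maximalIdeal R | ∀ (σ : G) (x : R),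
        Ideal.Quotient.mk (IsLocalRing.maximalIdeal R) x = t →
          Ideal.Quotient.mk (IsLocalRing.maximalIdeal R) (σ • x) = t} :=
  image_of_invariants_in_residue_field_eq_fixed_field_general (IsLocalRing.maximalIdeal R)
    (fun σ _ ↦ (smul_mem_maximalIdeal_iff σ).mpr) (by simpa using hG.map (Ideal.Quotient.mk _))
end

section
/- Let (R,𝔪) be a complete Noetherian local ring and let a finite group G act on R by ring automorphisms, with |G| invertible in R. Then R is a finitely generated module over its invariant ring R^G. -/
/-!
The orbit map `x ↦ (σ ↦ σ • x)` embeds `R` into the Noetherian `R`-module `G → R`, so finitely many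
`y` have orbit maps that generate the `R`-span of all of them. An expansion `σ • x = ∑ c y * σ • y`,
valid for all `σ` at once, can be averaged over `G` against an element `a` of trace
`∑ σ, σ • a = 1`: the coefficients become the traces of `a * c y`, which are invariant, and `x` is
recovered. If `|G|` is invertible, then `a = |G|⁻¹` has trace `1`.
-/

section Semiring

variable {G R : Type*} [Group G] [Fintype G] [Semiring R] [MulSemiringAction G R]

theorem exists_sum_smul_eq_one_of_isUnit_card_s5 (hG : IsUnit (Fintype.card G : R)) :
    ∃ a : R, ∑ σ : G, σ • a = 1 := by
  obtain ⟨a, ha⟩ := hG.exists_right_inv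
  have smul_card (σ : G) : σ • (Fintype.card G : R) = Fintype.card G :=
    map_natCast (MulSemiringAction.toRingHom G R σ) _
  refine ⟨a, hG.mul_left_cancel ?_⟩
  calc (Fintype.card G : R) * ∑ σ : G, σ • a
      = ∑ σ : G, σ • ((Fintype.card G : R) * a) := by
        simp only [Finset.mul_sum, smul_mul', smul_card]
    _ = Fintype.card G * 1 := by simp [ha]

theorem eq_sum_sum_smul_mul_of_forall_smul_eq {a : R} (ha : ∑ σ : G, σ • a = 1) {ι : Type*}
    {t : Finset ι} {c y : ι → R} {x : R} (hx : ∀ σ : G, σ • x = ∑ i ∈ t, c i * σ • y i) :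
    x = ∑ i ∈ t, (∑ σ : G, σ • (a * c i)) * y i := by
  have smul_mul_eq (σ : G) : σ • a * x = ∑ i ∈ t, σ • (a * c i) * y i := by
    calc σ • a * x = σ • (a * σ⁻¹ • x) := by rw [smul_mul', smul_inv_smul]
      _ = ∑ i ∈ t, σ • (a * c i) * y i := by
        simp only [hx, Finset.mul_sum, Finset.smul_sum, ← mul_assoc, smul_mul', smul_inv_smul]
  calc x = ∑ σ : G, σ • a * x := by rw [← Finset.sum_mul, ha, one_mul]
    _ = ∑ i ∈ t, (∑ σ : G, σ • (a * c i)) * y i := by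
      simp only [smul_mul_eq, Finset.sum_mul]
      exact Finset.sum_comm

end Semiring

section CommRing

variable {G R : Type*} [Group G] [Fintype G] [CommRing R] [MulSemiringAction G R]

theorem sum_smul_mem_fixedSubring (r : R) : ∑ σ : G, σ • r ∈ fixedSubring G R := by
  intro τ
  rw [Finset.smul_sum]
  exact Fintype.sum_equiv (Equiv.mulLeft τ) _ _ fun σ => smul_smul τ σ r

theorem mem_span_fixedSubring_of_toFun_mem_span {a : R} (ha : ∑ σ : G, σ • a = 1) {s : Set R}
    {x : R} (hx : MulAction.toFun G R x ∈ Submodule.span R (MulAction.toFun G R '' s)) :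
    x ∈ Submodule.span (fixedSubring G R) s := by
  obtain ⟨c, hcs, hc⟩ := (Finsupp.mem_span_image_iff_linearCombination R).1 hx
  have expansion (σ : G) : σ • x = ∑ y ∈ c.support, c y * σ • y := by
    simpa [Finsupp.linearCombination_apply, Finsupp.sum] using (congrFun hc σ).symm
  rw [eq_sum_sum_smul_mul_of_forall_smul_eq ha expansion]
  refine Submodule.sum_mem _ fun y hy => ?_
  let trace : fixedSubring G R := ⟨_, sum_smul_mem_fixedSubring (a * c y)⟩
  exact Submodule.smul_mem _ trace (Submodule.subset_span (hcs hy))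

theorem finite_over_invariants_general [IsNoetherianRing R] {a : R} (ha : ∑ σ : G, σ • a = 1) :
    Module.Finite (fixedSubring G R) R := by
  classical
  obtain ⟨t, ht, hspan⟩ := (Submodule.fg_span_iff_fg_span_finset_subset (R := R)
    (MulAction.toFun G R '' Set.univ)).1 (IsNoetherian.noetherian _)
  obtain ⟨s, -, rfl⟩ := Finset.subset_set_image_iff.1 ht
  refine ⟨⟨s, eq_top_iff.2 fun x _ => mem_span_fixedSubring_of_toFun_mem_span ha ?_⟩⟩
  rw [← Finset.coe_image, ← hspan]
  exact Submodule.subset_span (Set.mem_image_of_mem _ (Set.mem_univ x))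

end CommRing

/-- If `R` is a complete Noetherian local ring with a finite group `G` acting by ring
automorphisms and `|G|` invertible in `R`, then `R` is a finitely generated module over
its invariant subring `R^G`. -/
theorem finite_over_invariants
    (R : Type) [CommRing R] [IsNoetherianRing R] [IsLocalRing R]
    [IsAdicComplete (IsLocalRing.maximalIdeal R) R]
    (G : Type) [Group G] [Fintype G] [MulSemiringAction G R]
    (hG : IsUnit ((Fintype.card G : R))) :
    Module.Finite (fixedSubring G R) R := by
  obtain ⟨_, ha⟩ := exists_sum_smul_eq_one_of_isUnit_card_s5 hG
  exact finite_over_invariants_general ha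
end

section
/- Let (V,π) be a complete discrete valuation ring of characteristic zero whose residue field k = V/(π) is algebraically closed of characteristic p > 0. Let n ≥ 1 and let H be a finite subgroup of GL_n(ℂ) with p ∤ |H|. Then there exists a finite subgroup G of GL_n(V) that is isomorphic to H as an abstract group. Furthermore, if H ⊆ SL_n(ℂ), then G can be chosen with G ⊆ SL_n(V). -/
open IsLocalRing

/-!
A representation of a finite group `H` over `ℂ` has an integral form over a valuation ring whose
residue field has characteristic `p`: an `H`-stable lattice there is finitely generated and
torsion-free, hence free. Its matrix entries generate a finitely generated subring, which the
Nullstellensatz maps to the algebraically closed field `k`, so `H` acts over `k`. Since `|H|` is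
invertible in `V`, averaging the failure of multiplicativity turns a homomorphism modulo an ideal
`I` into one modulo `I ^ 2`; starting from any lift of the action over `k`, completeness of `V`
yields a homomorphism to matrices over `V`. None of these steps creates a kernel: if
`a ^ N = 1` and `a` reduces to `1`, then `1 + a + ⋯ + a ^ (N - 1)` reduces to the unit `N` while
annihilating `a - 1`.
-/

open Module

section Torsion

theorem eq_one_of_pow_eq_one_of_map_eq_one {A B : Type*} [Ring A] [Ring B] (f : A →+* B)
    (hf : ∀ s, IsUnit (f s) → IsLeftRegular s) {N : ℕ} (hN : IsUnit (N : B)) {a : A}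
    (ha : a ^ N = 1) (hfa : f a = 1) : a = 1 := by
  have hsum : f (∑ i ∈ Finset.range N, a ^ i) = N := by simp [hfa]
  have hzero : (∑ i ∈ Finset.range N, a ^ i) * (a - 1) = 0 := by rw [geom_sum_mul, ha, sub_self]
  exact sub_eq_zero.mp ((hf _ (hsum ▸ hN)).mul_left_eq_zero_iff.mp hzero)

variable {n R S : Type*} [Fintype n] [DecidableEq n] [CommRing R] [CommRing S]

theorem isLeftRegular_of_isLeftRegular_det {M : Matrix n n R} (hM : IsLeftRegular M.det) :
    IsLeftRegular M := fun X Y hXY ↦ by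
  have hsmul : M.det • X = M.det • Y := by
    simpa only [← mul_assoc, Matrix.adjugate_mul, smul_mul_assoc, one_mul] using
      congrArg (M.adjugate * ·) hXY
  ext i j
  exact hM (congrFun₂ hsmul i j)

variable {G : Type*} [Group G]

theorem mapMatrix_eq_one_iff_and_det_eq_one_iff (f : R →+* S)
    (hf : ∀ s, IsUnit (f s) → IsLeftRegular s) (hG : IsUnit (Nat.card G : S))
    (ρ : G →* Matrix n n R) (g : G) :
    (f.mapMatrix (ρ g) = 1 ↔ ρ g = 1) ∧ ((f.mapMatrix (ρ g)).det = 1 ↔ (ρ g).det = 1) := by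
  have hpow : ρ g ^ Nat.card G = 1 := by rw [← map_pow, pow_card_eq_one', map_one]
  have hdet_pow : (ρ g).det ^ Nat.card G = 1 := by rw [← Matrix.det_pow, hpow, Matrix.det_one]
  have hf_matrix (M : Matrix n n R) (hM : IsUnit (f.mapMatrix M)) : IsLeftRegular M :=
    isLeftRegular_of_isLeftRegular_det <| hf _ <| by
      rwa [f.map_det, ← Matrix.isUnit_iff_isUnit_det]
  have hG_matrix : IsUnit (Nat.card G : Matrix n n S) := by
    simpa using hG.map (algebraMap S (Matrix n n S))
  rw [← f.map_det]
  exact ⟨⟨eq_one_of_pow_eq_one_of_map_eq_one f.mapMatrix hf_matrix hG_matrix hpow,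
      fun h ↦ by rw [h, map_one]⟩,
    ⟨eq_one_of_pow_eq_one_of_map_eq_one f hf hG hdet_pow, fun h ↦ by rw [h, map_one]⟩⟩

end Torsion

section AlmostHom

variable {G R A : Type*} [Group G] [CommRing R] [Ring A] [Algebra R A]

theorem mul_mem_left_smul_top {I : Ideal R} (a : A) {b : A} (hb : b ∈ (I • ⊤ : Submodule R A)) :
    a * b ∈ (I • ⊤ : Submodule R A) :=
  Submodule.smul_top_le_comap_smul_top I (LinearMap.mulLeft R a) hb

theorem mul_mem_right_smul_top {I : Ideal R} {a : A} (b : A)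
    (ha : a ∈ (I • ⊤ : Submodule R A)) : a * b ∈ (I • ⊤ : Submodule R A) :=
  Submodule.smul_top_le_comap_smul_top I (LinearMap.mulRight R b) ha

theorem mul_mem_mul_smul_top {I J : Ideal R} {a b : A} (ha : a ∈ (I • ⊤ : Submodule R A))
    (hb : b ∈ (J • ⊤ : Submodule R A)) : a * b ∈ ((I * J) • ⊤ : Submodule R A) := by
  rw [mul_smul]
  induction ha using Submodule.smul_induction_on' with
  | smul r hr x _ =>
    rw [smul_mul_assoc]
    exact Submodule.smul_mem_smul hr (mul_mem_left_smul_top x hb)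
  | add x _ y _ hx hy => rw [add_mul]; exact add_mem hx hy

/-- The failure of `ρ` to be multiplicative at `(x, y)`: a noncommutative analogue of the
coboundary of a `1`-cochain. -/
def mulDefect (ρ : G → A) (x y : G) : A := ρ (x * y) - ρ x * ρ y

/-- The sum of `mulDefect ρ x z * ρ z⁻¹` over the group. Divided by the group order, it is the
correction to `ρ x` that removes the multiplicative defect to first order; the division is left to
the places of use so that no invertibility is needed here. -/
def sumMulDefect [Fintype G] (ρ : G → A) (x : G) : A := ∑ z, mulDefect ρ x z * ρ z⁻¹

/-- `ρ` is a homomorphism to the multiplicative monoid of `A` up to errors in `I A`, written as the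
submodule `I • ⊤` because that is the form in which `IsAdicComplete I A` is stated. The identity is
required to be preserved exactly. -/
structure IsMonoidHomMod (I : Ideal R) (ρ : G → A) : Prop where
  map_one : ρ 1 = 1
  mulDefect_mem (x y : G) : mulDefect ρ x y ∈ (I • ⊤ : Submodule R A)

theorem mulDefect_cocycle (ρ : G → A) (x y z : G) :
    mulDefect ρ x (y * z) + ρ x * mulDefect ρ y z =
      mulDefect ρ (x * y) z + mulDefect ρ x y * ρ z := by
  simp only [mulDefect, mul_sub, sub_mul, mul_assoc]
  abel

/- Multiplying the cocycle identity at `(x, y, z)` by `ρ z⁻¹` on the right and summing over `z`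
exhibits the defect as a coboundary, up to terms quadratic in the defect. -/
theorem card_nsmul_mulDefect_eq [Fintype G] {ρ : G → A} (hρ : ρ 1 = 1) (x y : G) :
    Fintype.card G • mulDefect ρ x y + sumMulDefect ρ (x * y)
        - ρ x * sumMulDefect ρ y - sumMulDefect ρ x * ρ y =
      ∑ z, (mulDefect ρ x z * mulDefect ρ z⁻¹ y + mulDefect ρ x y * mulDefect ρ z z⁻¹) := by
  have hcocycle : ∑ z, mulDefect ρ x (y * z) * ρ z⁻¹ + ρ x * sumMulDefect ρ y =
      sumMulDefect ρ (x * y) + ∑ z, mulDefect ρ x y * (ρ z * ρ z⁻¹) := by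
    simp only [sumMulDefect, Finset.mul_sum, ← Finset.sum_add_distrib, ← mul_assoc, ← add_mul,
      mulDefect_cocycle]
  have hshift : ∑ z, mulDefect ρ x (y * z) * ρ z⁻¹ =
      sumMulDefect ρ x * ρ y + ∑ z, mulDefect ρ x z * mulDefect ρ z⁻¹ y := by
    rw [← Equiv.sum_comp (Equiv.mulLeft y⁻¹)]
    simp [sumMulDefect, Finset.sum_mul, mulDefect, mul_sub, mul_assoc]
  have hinv : ∑ z, mulDefect ρ x y * (ρ z * ρ z⁻¹) =
      Fintype.card G • mulDefect ρ x y - ∑ z, mulDefect ρ x y * mulDefect ρ z z⁻¹ := by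
    simp [mulDefect, hρ, mul_sub, Finset.sum_sub_distrib]
  rw [hshift, hinv] at hcocycle
  rw [Finset.sum_add_distrib]
  linear_combination (norm := abel) -hcocycle

theorem IsMonoidHomMod.sumMulDefect_mem [Fintype G] {I : Ideal R} {ρ : G → A}
    (hρ : IsMonoidHomMod I ρ) (x : G) : sumMulDefect ρ x ∈ (I • ⊤ : Submodule R A) :=
  sum_mem fun z _ ↦ mul_mem_right_smul_top _ (hρ.mulDefect_mem x z)

theorem mulDefect_add_smul_sumMulDefect [Fintype G] {ρ : G → A} (hρ : ρ 1 = 1) {u : R}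
    (hu : u * Fintype.card G = 1) (x y : G) :
    mulDefect (ρ + u • sumMulDefect ρ) x y =
      u • ∑ z, (mulDefect ρ x z * mulDefect ρ z⁻¹ y + mulDefect ρ x y * mulDefect ρ z z⁻¹)
        - u • u • (sumMulDefect ρ x * sumMulDefect ρ y) := by
  have hcard : u • Fintype.card G • mulDefect ρ x y = mulDefect ρ x y := by
    rw [← Nat.cast_smul_eq_nsmul R, smul_smul, hu, one_smul]
  rw [← card_nsmul_mulDefect_eq hρ, smul_sub, smul_sub, smul_add, hcard]
  simp only [mulDefect, Pi.add_apply, Pi.smul_apply, add_mul, mul_add, smul_add, smul_mul_assoc,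
    mul_smul_comm]
  abel

theorem IsMonoidHomMod.add_smul_sumMulDefect [Fintype G] {I : Ideal R} {ρ : G → A}
    (hρ : IsMonoidHomMod I ρ) {u : R} (hu : u * Fintype.card G = 1) :
    IsMonoidHomMod (I * I) (ρ + u • sumMulDefect ρ) where
  map_one := by simp [sumMulDefect, mulDefect, hρ.map_one]
  mulDefect_mem x y := by
    rw [mulDefect_add_smul_sumMulDefect hρ.map_one hu]
    refine sub_mem (Submodule.smul_mem _ _ <| sum_mem fun z _ ↦ add_mem ?_ ?_)
      (Submodule.smul_mem _ _ <| Submodule.smul_mem _ _ ?_)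
    · exact mul_mem_mul_smul_top (hρ.mulDefect_mem _ _) (hρ.mulDefect_mem _ _)
    · exact mul_mem_mul_smul_top (hρ.mulDefect_mem _ _) (hρ.mulDefect_mem _ _)
    · exact mul_mem_mul_smul_top (hρ.sumMulDefect_mem _) (hρ.sumMulDefect_mem _)

theorem IsMonoidHomMod.mono {I J : Ideal R} (hIJ : I ≤ J) {ρ : G → A}
    (hρ : IsMonoidHomMod I ρ) : IsMonoidHomMod J ρ where
  map_one := hρ.map_one
  mulDefect_mem x y := Submodule.smul_mono_left hIJ (hρ.mulDefect_mem x y)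

theorem IsMonoidHomMod.exists_isMonoidHomMod_mul [Finite G] (hG : IsUnit (Nat.card G : R))
    {I : Ideal R} {ρ : G → A} (hρ : IsMonoidHomMod I ρ) :
    ∃ ρ' : G → A, IsMonoidHomMod (I * I) ρ' ∧ ∀ x, ρ' x - ρ x ∈ (I • ⊤ : Submodule R A) := by
  have := Fintype.ofFinite G
  obtain ⟨u, hu⟩ := hG.exists_left_inv
  rw [Nat.card_eq_fintype_card] at hu
  refine ⟨_, hρ.add_smul_sumMulDefect hu, fun x ↦ ?_⟩
  simpa using Submodule.smul_mem _ u (hρ.sumMulDefect_mem x)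

theorem IsMonoidHomMod.exists_seq [Finite G] (hG : IsUnit (Nat.card G : R))
    {I : Ideal R} {ρ : G → A} (hρ : IsMonoidHomMod I ρ) :
    ∃ s : ℕ → G → A, s 0 = ρ ∧ ∀ k, IsMonoidHomMod (I ^ (k + 1)) (s k) ∧
      ∀ x, s (k + 1) x - s k x ∈ (I ^ (k + 1) • ⊤ : Submodule R A) := by
  have hstep (k : ℕ) (σ : {σ : G → A // IsMonoidHomMod (I ^ (k + 1)) σ}) :
      ∃ σ' : {σ : G → A // IsMonoidHomMod (I ^ (k + 2)) σ},
        ∀ x, σ'.1 x - σ.1 x ∈ (I ^ (k + 1) • ⊤ : Submodule R A) := by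
    obtain ⟨σ', hσ', hsub⟩ := σ.2.exists_isMonoidHomMod_mul hG
    refine ⟨⟨σ', hσ'.mono ?_⟩, hsub⟩
    rw [← pow_add]
    exact Ideal.pow_le_pow_right (by lia)
  choose next hnext using hstep
  let s (k : ℕ) : {σ : G → A // IsMonoidHomMod (I ^ (k + 1)) σ} :=
    Nat.rec ⟨ρ, by simpa using hρ⟩ next k
  exact ⟨fun k ↦ (s k).1, rfl, fun k ↦ ⟨(s k).2, hnext k (s k)⟩⟩

theorem IsMonoidHomMod.exists_monoidHom [Finite G] (hG : IsUnit (Nat.card G : R))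
    {I : Ideal R} [IsAdicComplete I A] {ρ : G → A} (hρ : IsMonoidHomMod I ρ) :
    ∃ τ : G →* A, ∀ x, τ x - ρ x ∈ (I • ⊤ : Submodule R A) := by
  obtain ⟨s, rfl, hs⟩ := hρ.exists_seq hG
  have hcauchy (x : G) : AdicCompletion.IsAdicCauchy I A fun k ↦ s k x := by
    rw [AdicCompletion.isAdicCauchy_iff]
    refine fun k ↦ (SModEq.sub_mem.mpr ?_).symm
    exact Submodule.smul_mono_left (Ideal.pow_le_pow_right k.le_succ) ((hs k).2 x)
  choose τ hτ using fun x ↦ IsPrecomplete.prec inferInstance (hcauchy x)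
  have hsub (k : ℕ) (x : G) : τ x - s k x ∈ (I ^ k • ⊤ : Submodule R A) :=
    SModEq.sub_mem.mp (hτ x k).symm
  have hmul (x y : G) : τ (x * y) = τ x * τ y := by
    refine IsHausdorff.eq_iff_smodEq (I := I) |>.mpr fun k ↦ SModEq.sub_mem.mpr ?_
    have hdefect := Submodule.smul_mono_left (Ideal.pow_le_pow_right k.le_succ)
      ((hs k).1.mulDefect_mem x y)
    convert sub_mem (add_mem (hsub k (x * y)) hdefect) (add_mem
      (mul_mem_right_smul_top (τ y) (hsub k x)) (mul_mem_left_smul_top (s k x) (hsub k y))) using 1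
    simp only [mulDefect]
    noncomm_ring
  have hone : τ 1 = 1 := by
    refine IsHausdorff.eq_iff_smodEq (I := I) |>.mpr fun k ↦ SModEq.sub_mem.mpr ?_
    simpa [(hs k).1.map_one] using hsub k 1
  refine ⟨⟨⟨τ, hone⟩, hmul⟩, fun x ↦ ?_⟩
  convert add_mem (hsub 1 x) ((hs 0).2 x) using 1 <;> simp

end AlmostHom

section Lifting

theorem isAdicComplete_pi {R ι : Type*} [CommRing R] (I : Ideal R) [Finite ι] (M : ι → Type*)
    [∀ i, AddCommGroup (M i)] [∀ i, Module R (M i)] [∀ i, IsAdicComplete I (M i)] :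
    IsAdicComplete I (∀ i, M i) := by
  classical
  have := Fintype.ofFinite ι
  rw [← AdicCompletion.of_bijective_iff,
    ← (AdicCompletion.piEquivOfFintype I M).bijective.of_comp_iff']
  convert Function.Bijective.piMap fun i ↦ AdicCompletion.of_bijective I (M i)
  ext x i k
  simp

instance isAdicComplete_matrix {R m n : Type*} [CommRing R] [Finite m] [Finite n] (I : Ideal R)
    [IsAdicComplete I R] : IsAdicComplete I (Matrix m n R) :=
  have := isAdicComplete_pi I fun _ : n ↦ R
  isAdicComplete_pi I fun _ : m ↦ n → R

variable {n R S : Type*} [Fintype n] [DecidableEq n] [CommRing R] [CommRing S]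

theorem mem_ker_smul_top_iff_mapMatrix_eq_zero (f : R →+* S) {M : Matrix n n R} :
    M ∈ (RingHom.ker f • ⊤ : Submodule R (Matrix n n R)) ↔ f.mapMatrix M = 0 := by
  refine ⟨fun hM ↦ ?_, fun hM ↦ ?_⟩
  · induction hM using Submodule.smul_induction_on' with
    | smul r hr M _ => ext i j; simp [RingHom.mem_ker.mp hr]
    | add M _ N _ hM hN => rw [map_add, hM, hN, add_zero]
  · rw [Matrix.matrix_eq_sum_single M]
    refine sum_mem fun i _ ↦ sum_mem fun j _ ↦ ?_
    rw [← mul_one (M i j), ← smul_eq_mul, ← Matrix.smul_single]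
    exact Submodule.smul_mem_smul (congrFun₂ hM i j) trivial

theorem exists_monoidHom_mapMatrix_eq {f : R →+* S} (hf : Function.Surjective f)
    [IsAdicComplete (RingHom.ker f) R] {G : Type*} [Group G] [Finite G]
    (hG : IsUnit (Nat.card G : R)) (σ : G →* Matrix n n S) :
    ∃ τ : G →* Matrix n n R, ∀ g, f.mapMatrix (τ g) = σ g := by
  classical
  have hf_matrix : Function.Surjective (f.mapMatrix (m := n)) := fun M ↦
    ⟨M.map (Function.surjInv hf), by ext i j; simp [Function.surjInv_eq]⟩
  let ρ : G → Matrix n n R := Function.update (Function.surjInv hf_matrix ∘ σ) 1 1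
  have hρσ (g : G) : f.mapMatrix (ρ g) = σ g := by
    rcases eq_or_ne g 1 with rfl | hg
    · simp [ρ]
    · simp [ρ, hg, Function.surjInv_eq, -RingHom.mapMatrix_apply]
  have hρ : IsMonoidHomMod (RingHom.ker f) ρ :=
    ⟨Function.update_self .., fun x y ↦ (mem_ker_smul_top_iff_mapMatrix_eq_zero f).mpr <| by
      rw [mulDefect, map_sub, map_mul, hρσ, hρσ, hρσ, map_mul, sub_self]⟩
  obtain ⟨τ, hτ⟩ := hρ.exists_monoidHom hG
  refine ⟨τ, fun g ↦ ?_⟩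
  rw [← hρσ, ← sub_eq_zero, ← map_sub]
  exact (mem_ker_smul_top_iff_mapMatrix_eq_zero f).mp (hτ g)

end Lifting

section EntriesInSubring

variable {n G R S : Type*} [Fintype n] [DecidableEq n] [Group G] [CommRing R] [CommRing S]

theorem exists_monoidHom_mapMatrix_eq_of_mem_range {f : S →+* R} (hf : Function.Injective f)
    (ρ : G →* Matrix n n R) (hρ : ∀ g i j, ρ g i j ∈ f.range) :
    ∃ ρ' : G →* Matrix n n S, ∀ g, f.mapMatrix (ρ' g) = ρ g := by
  choose ρ' hρ' using hρ
  have hmap (g : G) : f.mapMatrix (.of (ρ' g)) = ρ g := Matrix.ext (hρ' g)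
  have hf_matrix : Function.Injective (f.mapMatrix (m := n)) := Matrix.map_injective hf
  exact ⟨⟨⟨fun g ↦ .of (ρ' g), hf_matrix <| by rw [hmap, map_one, map_one]⟩,
    fun g h ↦ hf_matrix <| by simp only [map_mul, hmap]⟩, hmap⟩

theorem exists_finiteType_subalgebra_monoidHom [Finite G] (ρ : G →* Matrix n n R) :
    ∃ (B : Subalgebra ℤ R) (ρ' : G →* Matrix n n B), Algebra.FiniteType ℤ B ∧
      ∀ g, (algebraMap B R).mapMatrix (ρ' g) = ρ g := by
  let entries : Set R := Set.range fun x : G × n × n ↦ ρ x.1 x.2.1 x.2.2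
  obtain ⟨ρ', hρ'⟩ := exists_monoidHom_mapMatrix_eq_of_mem_range
    (f := algebraMap (Algebra.adjoin ℤ entries) R) Subtype.val_injective ρ
    fun g i j ↦ ⟨⟨_, Algebra.subset_adjoin ⟨(g, i, j), rfl⟩⟩, rfl⟩
  exact ⟨_, ρ', Algebra.FiniteType.adjoin_of_finite (Set.finite_range _), hρ'⟩

end EntriesInSubring

section IntegralForm

variable {G K W : Type*} [Group G] [Finite G] [AddCommGroup W]

theorem exists_isLattice_forall_apply_mem (A : Type*) [CommRing A] [CommRing K] [Algebra A K]
    [Module A W] [Module K W] [IsScalarTower A K W] [Module.Finite K W]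
    (ρ : Representation K G W) :
    ∃ L : Submodule A W, L.IsLattice K ∧ ∀ g, ∀ v ∈ L, ρ g v ∈ L := by
  obtain ⟨s, hs⟩ := Module.Finite.fg_top (R := K) (M := W)
  let orbits : Set W := Set.range fun x : G × s ↦ ρ x.1 x.2
  refine ⟨Submodule.span A orbits, ⟨Submodule.fg_span (Set.finite_range _), ?_⟩, fun g v hv ↦ ?_⟩
  · rw [Submodule.span_span_of_tower, eq_top_iff, ← hs]
    exact Submodule.span_mono fun v hv ↦ ⟨(1, ⟨v, hv⟩), by simp⟩
  · induction hv using Submodule.span_induction with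
    | mem v hv =>
      obtain ⟨⟨h, v⟩, rfl⟩ := hv
      exact Submodule.subset_span ⟨(g * h, v), by simp⟩
    | zero => simp
    | add v w _ _ hv hw => rw [map_add]; exact add_mem hv hw
    | smul a v _ hv =>
      rw [LinearMap.map_smul_of_tower]
      exact Submodule.smul_mem _ a hv

variable {A : Type*} [CommRing A] [Field K] [Algebra A K] [IsFractionRing A K]
  [Module A W] [Module K W] [IsScalarTower A K W]

theorem extendOfIsLattice_repr {ι : Type*} {L : Submodule A W} [L.IsLattice K] (c : Basis ι A L)
    (v : L) (i : ι) : (c.extendOfIsLattice K).repr v i = algebraMap A K (c.repr v i) := by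
  have hrepr : (c.extendOfIsLattice K).repr.toLinearMap.restrictScalars A ∘ₗ L.subtype =
      Finsupp.mapRange.linearMap (Algebra.linearMap A K) ∘ₗ c.repr.toLinearMap :=
    c.ext fun j ↦ by
      rw [LinearMap.comp_apply, L.subtype_apply, ← c.extendOfIsLattice_apply K]
      simp [-Basis.extendOfIsLattice_apply]
  exact DFunLike.congr_fun (LinearMap.congr_fun hrepr v) i

theorem free_of_isLattice [IsDomain A] [ValuationRing A] (L : Submodule A W) [L.IsLattice K] :
    Module.Free A L := by
  have : Module.Finite A L := Submodule.IsLattice.finite K L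
  have : IsTorsionFree A W := .trans_faithfulSMul A K W
  have : Module.Flat A L := by
    rw [Flat.flat_iff_torsion_eq_bot_of_isBezout, ← Submodule.isTorsionFree_iff_torsion_eq_bot]
    infer_instance
  exact free_of_flat_of_isLocalRing

theorem exists_monoidHom_mapMatrix_eq_toMatrix (A : Type*) [CommRing A] [IsDomain A]
    [ValuationRing A] [Algebra A K] [IsFractionRing A K] {n : Type*} [Fintype n] [DecidableEq n]
    (b₀ : Basis n K W) (ρ : Representation K G W) :
    ∃ (b : Basis n K W) (ρ' : G →* Matrix n n A),
      ∀ g, (algebraMap A K).mapMatrix (ρ' g) = LinearMap.toMatrix b b (ρ g) := by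
  let _ : Module A W := .compHom W (algebraMap A K)
  have : IsScalarTower A K W := .of_algebraMap_smul fun _ _ ↦ rfl
  have : Module.Finite K W := .of_basis b₀
  obtain ⟨L, hL, hρL⟩ := exists_isLattice_forall_apply_mem A ρ
  have := free_of_isLattice (K := K) L
  let c₀ := Free.chooseBasis A L
  let c : Basis n A L := c₀.reindex ((c₀.extendOfIsLattice K).indexEquiv b₀)
  let b : Basis n K W := c.extendOfIsLattice K
  refine ⟨b, exists_monoidHom_mapMatrix_eq_of_mem_range (FaithfulSMul.algebraMap_injective A K)
    ((LinearMap.toMatrixAlgEquiv b : _ →* Matrix n n K).comp ρ) fun g i j ↦ ?_⟩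
  refine ⟨c.repr ⟨ρ g (c j), hρL g _ (c j).2⟩ i, ?_⟩
  rw [← extendOfIsLattice_repr (K := K)]
  simp [b, LinearMap.toMatrixAlgEquiv_apply]

end IntegralForm

section Specialization

theorem nonempty_algHom_of_finiteType (F B k : Type*) [Field F] [CommRing B] [Nontrivial B]
    [Algebra F B] [Algebra.FiniteType F B] [Field k] [Algebra F k] [IsAlgClosed k] :
    Nonempty (B →ₐ[F] k) := by
  obtain ⟨m, hm⟩ := Ideal.exists_maximal B
  let _ : Field (B ⧸ m) := Ideal.Quotient.field m
  have : Module.Finite F (B ⧸ m) := finite_of_finite_type_of_isJacobsonRing F (B ⧸ m)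
  exact ⟨(IsAlgClosed.lift : B ⧸ m →ₐ[F] k).comp (Ideal.Quotient.mkₐ F m)⟩

variable {B Q : Type*} [CommRing B] [Algebra.FiniteType ℤ B] [Field Q] (k : Type*) [Field k]
  [IsAlgClosed k]

open TensorProduct in
theorem nonempty_ringHom_of_common_subfield (F : Type*) [Field F] [Algebra F Q] [Algebra F k]
    (f : B →+* Q) : Nonempty (B →+* k) := by
  let fF : F ⊗[ℤ] B →ₐ[F] Q :=
    Algebra.TensorProduct.lift (Algebra.ofId F Q) f.toIntAlgHom fun _ _ ↦ .all _ _
  -- The map to `Q` is what shows that `F ⊗ B` does not vanish.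
  have : Nontrivial (F ⊗[ℤ] B) := fF.toRingHom.domain_nontrivial
  obtain ⟨φ⟩ := nonempty_algHom_of_finiteType F (F ⊗[ℤ] B) k
  exact ⟨(φ : F ⊗[ℤ] B →+* k).comp (Algebra.TensorProduct.includeRight : B →ₐ[ℤ] F ⊗[ℤ] B)⟩

theorem nonempty_ringHom_of_charP (p : ℕ) [CharP Q p] [CharP k p] (f : B →+* Q) :
    Nonempty (B →+* k) := by
  rcases CharP.char_is_prime_or_zero Q p with hp | rfl
  · have : Fact p.Prime := ⟨hp⟩
    let _ : Algebra (ZMod p) Q := ZMod.algebra Q p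
    let _ : Algebra (ZMod p) k := ZMod.algebra k p
    exact nonempty_ringHom_of_common_subfield k (ZMod p) f
  · have := CharP.charP_to_charZero Q
    have := CharP.charP_to_charZero k
    exact nonempty_ringHom_of_common_subfield k ℚ f

end Specialization

section ValuationSubring

theorem exists_valuationSubring_charP_residueField {K : Type*} [Field K] {p : ℕ}
    (hp : p.Prime ∨ p = 0) (hK : p ∣ ringChar K) :
    ∃ A : ValuationSubring K, CharP (ResidueField A) p := by
  let P : Ideal ℤ := Ideal.span {(p : ℤ)}
  have : P.IsPrime := by
    rcases hp with hp | rfl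
    · exact (Ideal.span_singleton_prime (by exact_mod_cast hp.ne_zero)).mpr
        (Nat.prime_iff_prime_int.mp hp)
    · simpa [P] using Ideal.isPrime_bot
  have hunit (y : P.primeCompl) : IsUnit (Int.castRingHom K y) := by
    refine isUnit_iff_ne_zero.mpr fun hy ↦ y.2 (Ideal.mem_span_singleton.mpr ?_)
    exact (Int.natCast_dvd_natCast.mpr hK).trans ((CharP.intCast_eq_zero_iff K _ _).mp hy)
  let f : Localization.AtPrime P →+* K := IsLocalization.lift hunit
  obtain ⟨A, hA, hlocal⟩ := exists_factor_valuationRing f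
  refine ⟨A, ⟨fun m ↦ ?_⟩⟩
  let fA : Localization.AtPrime P →+* A := f.codRestrict A.toSubring hA
  calc (m : ResidueField A) = 0 ↔ ¬ IsUnit (m : A) := by
        rw [← map_natCast (residue A), residue_eq_zero_iff, mem_maximalIdeal, mem_nonunits_iff]
    _ ↔ ¬ IsUnit (algebraMap ℤ (Localization.AtPrime P) m) := by
        rw [← map_natCast fA, isUnit_map_iff fA, map_natCast]
    _ ↔ p ∣ m := by
        rw [IsLocalization.AtPrime.isUnit_to_map_iff _ P, Ideal.mem_primeCompl_iff, not_not,
          Ideal.mem_span_singleton, Int.natCast_dvd_natCast]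

end ValuationSubring

section Reduction

variable {G n K : Type*} [Group G] [Finite G] [Fintype n] [DecidableEq n] [Field K]

theorem exists_monoidHom_matrix_of_isAlgClosed {p : ℕ} (hK : p ∣ ringChar K) (k : Type*) [Field k]
    [IsAlgClosed k] [CharP k p] (hG : ¬ p ∣ Nat.card G) (ρ : G →* Matrix n n K) :
    ∃ σ : G →* Matrix n n k, ∀ g, (σ g = 1 ↔ ρ g = 1) ∧ ((σ g).det = 1 ↔ (ρ g).det = 1) := by
  obtain ⟨A, hA⟩ := exists_valuationSubring_charP_residueField (CharP.char_is_prime_or_zero k p) hK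
  obtain ⟨b, ρA, hρA⟩ := exists_monoidHom_mapMatrix_eq_toMatrix A (Pi.basisFun K n)
    ((Matrix.toLinAlgEquiv' (R := K) (n := n) : _ →* Module.End K (n → K)).comp ρ)
  obtain ⟨B, ρB, _, hρB⟩ := exists_finiteType_subalgebra_monoidHom ρA
  obtain ⟨φ⟩ := nonempty_ringHom_of_charP k p ((residue A).comp (algebraMap B A))
  have hk : IsUnit (Nat.card G : k) := isUnit_iff_ne_zero.mpr <| by
    rwa [Ne, CharP.cast_eq_zero_iff k p]
  have hφ (s : B) (hs : IsUnit (φ s)) : IsLeftRegular s :=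
    (IsRegular.of_ne_zero fun h ↦ hs.ne_zero <| by rw [h, map_zero]).left
  let ψ : B →+* K := (algebraMap A K).comp (algebraMap B A)
  have hψ : Function.Injective ψ := Subtype.val_injective.comp Subtype.val_injective
  have hψρ (g : G) : ψ.mapMatrix (ρB g) = LinearMap.toMatrix b b (Matrix.toLin' (ρ g)) :=
    (congrArg (algebraMap A K).mapMatrix (hρB g)).trans (hρA g)
  refine ⟨(φ.mapMatrix (m := n) : _ →* _).comp ρB, fun g ↦ ?_⟩
  obtain ⟨hone, hdet⟩ := mapMatrix_eq_one_iff_and_det_eq_one_iff φ hφ hk ρB g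
  refine ⟨hone.trans ?_, hdet.trans ?_⟩
  · rw [← map_eq_one_iff ψ.mapMatrix (Matrix.map_injective hψ), hψρ]
    exact map_eq_one_iff (Matrix.toLinAlgEquiv'.trans (LinearMap.toMatrixAlgEquiv b))
      (AlgEquiv.injective _)
  · rw [← map_eq_one_iff ψ hψ, ψ.map_det, hψρ, LinearMap.det_toMatrix, LinearMap.det_toLin']

theorem exists_monoidHom_matrix_of_isAdicComplete {V : Type*} [CommRing V] [IsLocalRing V]
    [IsAdicComplete (maximalIdeal V) V] {p : ℕ} [CharP (ResidueField V) p]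
    [IsAlgClosed (ResidueField V)] (hK : p ∣ ringChar K) (hG : ¬ p ∣ Nat.card G)
    (ρ : G →* Matrix n n K) :
    ∃ τ : G →* Matrix n n V, ∀ g, (τ g = 1 ↔ ρ g = 1) ∧ ((τ g).det = 1 ↔ (ρ g).det = 1) := by
  obtain ⟨σ, hσ⟩ := exists_monoidHom_matrix_of_isAlgClosed hK (ResidueField V) hG ρ
  have hk : IsUnit (Nat.card G : ResidueField V) := isUnit_iff_ne_zero.mpr <| by
    rwa [Ne, CharP.cast_eq_zero_iff _ p]
  have hV : IsUnit (Nat.card G : V) := .of_map (residue V) _ <| by rwa [map_natCast]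
  have : IsAdicComplete (RingHom.ker (residue V)) V := by rwa [ker_residue]
  obtain ⟨τ, hτ⟩ := exists_monoidHom_mapMatrix_eq residue_surjective hV σ
  refine ⟨τ, fun g ↦ ?_⟩
  obtain ⟨hone, hdet⟩ := mapMatrix_eq_one_iff_and_det_eq_one_iff (residue V)
    (fun s hs ↦ (IsUnit.of_map (residue V) s hs).isRegular.left) hk τ g
  rw [hτ] at hone hdet
  exact ⟨hone.symm.trans (hσ g).1, hdet.symm.trans (hσ g).2⟩

end Reduction

/- As `p` is zero or a prime, `hK` says that `K` has characteristic `0` or `p`. -/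
theorem lift_finite_complex_linear_group_to_DVR_general {V K n : Type*} [CommRing V]
    [IsLocalRing V] [IsAdicComplete (maximalIdeal V) V] {p : ℕ} [CharP (ResidueField V) p]
    [IsAlgClosed (ResidueField V)] [Field K] (hK : p ∣ ringChar K) [Fintype n] [DecidableEq n]
    (H : Subgroup (GL n K)) [Finite H] (hH : ¬ p ∣ Nat.card H) :
    ∃ (G : Subgroup (GL n V)) (e : H ≃* G), ∀ h,
      ((e h : GL n V) : Matrix n n V).det = 1 ↔ ((h : GL n K) : Matrix n n K).det = 1 := by
  obtain ⟨τ, hτ⟩ := exists_monoidHom_matrix_of_isAdicComplete (V := V) hK hH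
    ((Units.coeHom (Matrix n n K)).comp H.subtype)
  have hinj : Function.Injective τ.toHomUnits := by
    refine (injective_iff_map_eq_one _).mpr fun h hh ↦ ?_
    simpa using (hτ h).1.mp (congrArg Units.val hh)
  exact ⟨τ.toHomUnits.range, MonoidHom.ofInjective hinj, fun h ↦ (hτ h).2⟩

/-- Let `(V,π)` be a complete DVR of characteristic zero whose residue field is
algebraically closed of characteristic `p > 0`, let `n ≥ 1` and let `H` be a finite
subgroup of `GL_n(ℂ)` with `p ∤ |H|`.  Then there is a finite subgroup `G` of
`GL_n(V)` isomorphic to `H` as an abstract group; moreover if `H ⊆ SL_n(ℂ)` then `G`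
can be chosen inside `SL_n(V)` (i.e. all its elements have determinant one). -/
theorem lift_finite_complex_linear_group_to_DVR
    (V : Type) [CommRing V] [IsDomain V] [IsDiscreteValuationRing V] [CharZero V]
    [IsAdicComplete (maximalIdeal V) V]
    (p : ℕ) (hp : p.Prime)
    [CharP (ResidueField V) p] [IsAlgClosed (ResidueField V)]
    (n : ℕ) (hn : 1 ≤ n)
    (H : Subgroup (GL (Fin n) ℂ)) [Finite H] (hH : ¬ (p ∣ Nat.card H)) :
    (∃ G : Subgroup (GL (Fin n) V), Nonempty (H ≃* G)) ∧
    ((∀ h ∈ H, Matrix.det (h : Matrix (Fin n) (Fin n) ℂ) = 1) →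
      ∃ G : Subgroup (GL (Fin n) V), Nonempty (H ≃* G) ∧
        ∀ g ∈ G, Matrix.det (g : Matrix (Fin n) (Fin n) V) = 1) := by
  obtain ⟨G, e, he⟩ :=
    lift_finite_complex_linear_group_to_DVR_general (V := V) (p := p) (by simp) H hH
  refine ⟨⟨G, ⟨e⟩⟩, fun hdet ↦ ⟨G, ⟨e⟩, fun g hg ↦ ?_⟩⟩
  simpa using (he (e.symm ⟨g, hg⟩)).mpr (hdet _ (e.symm ⟨g, hg⟩).2)
end

section
/- Let (V,π) be a complete discrete valuation ring of characteristic zero whose residue field k = V/(π) is algebraically closed of characteristic p > 0, and let G ⊆ GL₂(V) be a finite subgroup with p ∤ |G| having no pseudo-reflections except the identity, acting linearly on S = V[[x₁,x₂]]. Then every height-one prime of S^G is unramified in S; equivalently, for every height-one prime ideal 𝔟 of S, the inertia group T_𝔟 = {σ ∈ G : σ(a) − a ∈ 𝔟 for all a ∈ S} is trivial, i.e., if σ ∈ G satisfies σ(a) − a ∈ 𝔟 for all a ∈ S then σ = 1. -/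
open MvPowerSeries IsLocalRing

/-!
If `σ ≠ 1` is not a pseudo-reflection modulo `π`, then `det (σ - 1)` is a unit of `V`, so the linear
forms `σ xᵢ - xᵢ` span the same submodule as the variables. An ideal containing all `σ a - a` hence
contains `(x₁, x₂)`, which lies strictly above the nonzero prime `(x₁)`: its height exceeds one.
-/

section Matrix

open Matrix

variable {n : Type*} [Fintype n] [DecidableEq n]

theorem isUnit_of_rank_eq_card {K : Type*} [Field K] {A : Matrix n n K}
    (hA : A.rank = Fintype.card n) : IsUnit A := by
  rw [← linearIndependent_rows_iff_isUnit, linearIndependent_iff_card_eq_finrank_span,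
    Set.finrank, ← rank_eq_finrank_span_row, hA]

theorem isUnit_det_of_rank_map_residue_eq_card {R : Type*} [CommRing R] [IsLocalRing R]
    {A : Matrix n n R} (hA : (A.map (residue R)).rank = Fintype.card n) : IsUnit A.det := by
  have hdet : IsUnit (A.map (residue R)).det :=
    (isUnit_iff_isUnit_det _).mp (isUnit_of_rank_eq_card hA)
  rwa [← RingHom.mapMatrix_apply, ← RingHom.map_det, isUnit_map_iff] at hdet

theorem mem_of_forall_sum_smul_mem {R M : Type*} [CommRing R] [AddCommMonoid M] [Module R M]
    (N : Submodule R M) {A : Matrix n n R} (hA : IsUnit A.det) {x : n → M}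
    (h : ∀ i, ∑ j, A i j • x j ∈ N) (k : n) : x k ∈ N := by
  have hx : ∑ i, A⁻¹ k i • ∑ j, A i j • x j = x k := calc
    ∑ i, A⁻¹ k i • ∑ j, A i j • x j = ∑ j, (A⁻¹ * A) k j • x j := by
      simp only [Finset.smul_sum, smul_smul, mul_apply, Finset.sum_smul]
      exact Finset.sum_comm
    _ = x k := by simp [nonsing_inv_mul A hA, one_apply]
  exact hx ▸ N.sum_mem fun i _ => N.smul_mem _ (h i)

end Matrix

section PowerSeries

variable {σ R : Type*}

section CommSemiring

variable [CommSemiring R]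

theorem X_dvd_X [Nontrivial R] {s t : σ} :
    (X s : MvPowerSeries σ R) ∣ X t ↔ s = t := by
  classical
  refine ⟨fun h => ?_, fun h => h ▸ dvd_rfl⟩
  by_contra hst
  have hcoeff := X_dvd_iff.mp h (Finsupp.single t 1) (Finsupp.single_eq_of_ne hst)
  exact one_ne_zero ((coeff_index_single_self_X t).symm.trans hcoeff)

theorem ker_killCompl_compl_singleton (s : σ) :
    RingHom.ker (killCompl (R := R) (Function.Embedding.subtype (· ∈ ({s}ᶜ : Set σ)))) =
      Ideal.span {X s} := by
  ext f
  rw [RingHom.mem_ker, Ideal.mem_span_singleton, X_dvd_iff, MvPowerSeries.ext_iff]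
  simp only [coeff_killCompl, coeff_zero]
  refine ⟨fun h m hm => ?_, fun h m => h _ (Finsupp.embDomain_of_notMem_range _ _ _ (by simp))⟩
  have hrange :
      m ∈ Set.range (Finsupp.embDomain (Function.Embedding.subtype (· ∈ ({s}ᶜ : Set σ)))) := by
    rw [Finsupp.mem_range_embDomain_iff, Function.Embedding.coe_subtype, Subtype.range_coe,
      Set.subset_compl_singleton_iff]
    simpa using hm
  obtain ⟨m, rfl⟩ := hrange
  exact h m

theorem span_X_lt [Nontrivial R] {I : Ideal (MvPowerSeries σ R)} {s t : σ} (hst : s ≠ t)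
    (hs : X s ∈ I) (ht : X t ∈ I) : Ideal.span {X s} < I := by
  refine lt_of_le_of_ne ((Ideal.span_singleton_le_iff_mem I).mpr hs) ?_
  rintro rfl
  exact hst (X_dvd_X.mp (Ideal.mem_span_singleton.mp ht))

end CommSemiring

section CommRing

variable [CommRing R]

theorem isPrime_span_X [IsDomain R] (s : σ) :
    (Ideal.span {X s} : Ideal (MvPowerSeries σ R)).IsPrime := by
  have : IsDomain (MvPowerSeries ↥({s}ᶜ : Set σ) R) := NoZeroDivisors.to_isDomain _
  rw [← ker_killCompl_compl_singleton]
  exact RingHom.ker_isPrime _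

theorem X_mem_of_isUnit_det_sub_one [Fintype σ] [DecidableEq σ] {M : Matrix σ σ R}
    (hM : IsUnit (M - 1).det) {I : Ideal (MvPowerSeries σ R)}
    (h : ∀ i, ∑ j, C (M j i) * X j - X i ∈ I) (i : σ) : X i ∈ I := by
  refine mem_of_forall_sum_smul_mem (I.restrictScalars R) (A := (M - 1).transpose)
    (by rwa [Matrix.det_transpose]) (x := X) (fun k => ?_) i
  have hk : ∑ j, (M - 1).transpose k j • (X j : MvPowerSeries σ R) =
      ∑ j, C (M j k) * X j - X k := by
    simp [sub_smul, Finset.sum_sub_distrib, smul_eq_C_mul, Matrix.one_apply]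
  exact hk ▸ h k

end CommRing

end PowerSeries

theorem inertia_trivial_of_no_pseudoreflections_general
    {V : Type*} [CommRing V] [IsDomain V] [IsLocalRing V]
    (G : Subgroup (GL (Fin 2) V)) [MulSemiringAction G (MvPowerSeries (Fin 2) V)]
    (hlin : ∀ (σ : G) (i : Fin 2),
      σ • (X i : MvPowerSeries (Fin 2) V) =
        ∑ j : Fin 2, C (((σ : GL (Fin 2) V) : Matrix (Fin 2) (Fin 2) V) j i) * X j)
    (hpr : ∀ σ : G, σ ≠ 1 →
      ¬ (((σ : GL (Fin 2) V) : Matrix (Fin 2) (Fin 2) V).map (residue V) - 1).rank ≤ 1)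
    (𝔟 : Ideal (MvPowerSeries (Fin 2) V))
    (h𝔟 : ∀ Q : Ideal (MvPowerSeries (Fin 2) V), Q.IsPrime → Q < 𝔟 → Q = ⊥)
    (σ : G) (hσ : ∀ a : MvPowerSeries (Fin 2) V, σ • a - a ∈ 𝔟) : σ = 1 := by
  by_contra hne
  set M : Matrix (Fin 2) (Fin 2) V := ((σ : GL (Fin 2) V) : Matrix (Fin 2) (Fin 2) V)
  have hrank : ((M - 1).map (residue V)).rank = Fintype.card (Fin 2) := by
    have hmap : (M - 1).map (residue V) = M.map (residue V) - 1 := by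
      simp only [← RingHom.mapMatrix_apply, map_sub, map_one]
    rw [hmap]
    exact le_antisymm (Matrix.rank_le_card_width _) (not_le.mp (hpr σ hne))
  have hdet : IsUnit (M - 1).det := isUnit_det_of_rank_map_residue_eq_card hrank
  have hX : ∀ i, X i ∈ 𝔟 := X_mem_of_isUnit_det_sub_one hdet fun i => hlin σ i ▸ hσ (X i)
  have hbot : Ideal.span {X (0 : Fin 2)} = ⊥ :=
    h𝔟 _ (isPrime_span_X 0) (span_X_lt zero_ne_one (hX 0) (hX 1))
  exact nonZeroDivisors.ne_zero X_mem_nonzeroDivisors (Ideal.span_singleton_eq_bot.mp hbot)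

/-- Let `(V,π)` be a complete DVR of characteristic zero with algebraically closed
residue field `k` of characteristic `p > 0`, and let `G ⊆ GL₂(V)` be a finite
subgroup with `p ∤ |G|`, acting linearly on `S = V[[x₁,x₂]]` (each `σ ∈ G` fixes the
coefficient ring `V` and sends `xᵢ` to the corresponding linear form), and having no
pseudo-reflections except the identity (for `σ ≠ 1` the reduction of `σ` mod `π`
satisfies `rank(σ̄ − 1) > 1`).  Then every height-one prime `𝔟` of `S` has trivial
inertia group: if `σ ∈ G` satisfies `σ(a) − a ∈ 𝔟` for all `a ∈ S`, then `σ = 1`.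
(Hence height-one primes of `S^G` are unramified in `S`.) -/
theorem inertia_trivial_of_no_pseudoreflections
    (V : Type) [CommRing V] [IsDomain V] [IsDiscreteValuationRing V] [CharZero V]
    [IsAdicComplete (maximalIdeal V) V]
    (p : ℕ) (hp : p.Prime)
    [CharP (ResidueField V) p] [IsAlgClosed (ResidueField V)]
    (G : Subgroup (GL (Fin 2) V)) [Finite G] (hG : ¬ (p ∣ Nat.card G))
    [MulSemiringAction G (MvPowerSeries (Fin 2) V)]
    (hlin : ∀ (σ : G) (i : Fin 2),
      σ • (X i : MvPowerSeries (Fin 2) V) =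
        ∑ j : Fin 2, C (σ := Fin 2) (R := V) (((σ : GL (Fin 2) V) : Matrix (Fin 2) (Fin 2) V) j i) * X j)
    (hconst : ∀ (σ : G) (v : V),
      σ • (C (σ := Fin 2) (R := V) v) = C (σ := Fin 2) (R := V) v)
    (hpr : ∀ σ : G, σ ≠ 1 →
      ¬ Matrix.rank
          ((((σ : GL (Fin 2) V) : Matrix (Fin 2) (Fin 2) V)).map (residue V) - 1) ≤ 1) :
    ∀ 𝔟 : Ideal (MvPowerSeries (Fin 2) V), 𝔟.IsPrime → 𝔟 ≠ ⊥ →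
      (∀ Q : Ideal (MvPowerSeries (Fin 2) V), Q.IsPrime → Q < 𝔟 → Q = ⊥) →
      ∀ σ : G, (∀ a : MvPowerSeries (Fin 2) V, σ • a - a ∈ 𝔟) → σ = 1 :=
  fun 𝔟 _ _ hmin =>
    inertia_trivial_of_no_pseudoreflections_general G hlin hpr 𝔟 hmin
end

section
/- Let (V,π) be a complete discrete valuation ring of characteristic zero whose residue field k = V/(π) is algebraically closed of characteristic p > 0, and let G ⊆ GL₂(V) be a finite subgroup with p ∤ |G| having no pseudo-reflections except the identity, acting linearly on S = V[[x₁,x₂]]. Let θ = π − g where g ∈ (x₁,x₂)² ∩ S^G (g = 0 allowed), and set B = S^G/(θ). Then for all L₁, L₂ ∈ add_{S^G}(S), the natural map induces an isomorphism Hom_B(L₁/θL₁, L₂/θL₂) ≅ Hom_{S^G}(L₁,L₂)/θ·Hom_{S^G}(L₁,L₂). -/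
/-- `M ∈ add_A(S)`: `M` is (isomorphic to) a direct summand of a finite direct sum of
copies of `S`, as an `A`-module. -/
def MemAdd (A : Type*) [CommRing A] (S : Type*) [AddCommGroup S] [Module A S]
    (M : Type*) [AddCommGroup M] [Module A M] : Prop :=
  ∃ (n : ℕ) (N N' : Submodule A (Fin n → S)), IsCompl N N' ∧ Nonempty (M ≃ₗ[A] N)

open MvPowerSeries IsLocalRing

/-!
Over the part of the spectrum on which `G` acts freely, `S` is Galois over `S^G`, and there every
`S^G`-linear map from `S` to an `S`-module `M` is a unique sum `t ↦ ∑ τ, τ t • u τ`. The absence of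
pseudo-reflections in dimension two makes `σ - 1` invertible for all `σ ≠ 1`, so every variable
vanishes on the fixed loci and the Noether different contains a power of it. As the constant term
of `θ` is nonzero, two variables form a regular sequence on `S / θS`, so for `M = S / θS` the
coefficients `u τ` extend from the free part. Lifting them to `S` lifts every `S^G`-linear map
`S → S / θS` to `S → S`, and passing to direct summands gives the same for the modules in `add S`.
The kernel of reduction consists of the maps divisible by `θ` because `θ` is a nonzerodivisor.
-/

section Closed

variable {S : Type*} [CommRing S] {M : Type*} [AddCommGroup M] [Module S M]

variable (M) in
/-- `M` is closed for `I` when the restriction `M = Hom(S, M) → Hom(I, M)` is bijective. For finite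
modules over a noetherian ring this says that `I` has grade at least two on `M`. -/
def IsClosedFor (I : Ideal S) : Prop :=
  ∀ f : I →ₗ[S] M, ∃! m : M, ∀ z : I, f z = (z : S) • m

theorem IsClosedFor.eq_zero {I : Ideal S} (h : IsClosedFor M I) {m : M}
    (hm : ∀ z ∈ I, z • m = 0) : m = 0 :=
  (h 0).unique (fun z => (hm z z.2).symm) fun z => (smul_zero (z : S)).symm

theorem isWeaklyRegular_pair_iff {x y : S} :
    RingTheory.Sequence.IsWeaklyRegular M [x, y] ↔
      IsSMulRegular M x ∧ ∀ m n : M, y • m = x • n → ∃ k, m = x • k := by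
  simp only [RingTheory.Sequence.isWeaklyRegular_cons_iff, RingTheory.Sequence.IsWeaklyRegular.nil,
    and_true, isSMulRegular_quotient_iff_mem_of_smul_mem,
    Submodule.mem_smul_pointwise_iff_exists, Submodule.mem_top, true_and, forall_exists_index]
  exact and_congr_right fun _ => forall_congr' fun m =>
    ⟨fun h n hn => (h n hn.symm).imp fun _ => Eq.symm,
      fun h n hn => (h n hn.symm).imp fun _ => Eq.symm⟩

theorem isWeaklyRegular_pow_pair {x y : S} (h : RingTheory.Sequence.IsWeaklyRegular M [x, y])
    (a b : ℕ) : RingTheory.Sequence.IsWeaklyRegular M [x ^ a, y ^ b] := by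
  obtain ⟨hx, hxy⟩ := isWeaklyRegular_pair_iff.1 h
  have pow_left (a : ℕ) : ∀ m n : M, y • m = x ^ a • n → ∃ k, m = x ^ a • k := by
    induction a with
    | zero => exact fun m _ _ => ⟨m, by simp⟩
    | succ a ih =>
      intro m n hmn
      obtain ⟨k, rfl⟩ := hxy m (x ^ a • n) (by rw [hmn, pow_succ', mul_smul])
      obtain ⟨l, rfl⟩ := ih k n (hx (by rw [pow_succ', mul_smul, smul_comm] at hmn; exact hmn))
      exact ⟨l, by rw [pow_succ', mul_smul]⟩
  refine isWeaklyRegular_pair_iff.2 ⟨hx.pow a, ?_⟩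
  induction b with
  | zero => exact fun m n hmn => ⟨n, by simpa using hmn⟩
  | succ b ih =>
    intro m n hmn
    obtain ⟨k, hk⟩ := pow_left a (y ^ b • m) n (by rw [← hmn, pow_succ', mul_smul])
    exact ih m k hk

theorem isClosedFor_of_isWeaklyRegular {I : Ideal S} {x y : S} (hxI : x ∈ I) (hyI : y ∈ I)
    (h : RingTheory.Sequence.IsWeaklyRegular M [x, y]) : IsClosedFor M I := by
  obtain ⟨hx, hxy⟩ := isWeaklyRegular_pair_iff.1 h
  intro f
  have smul_comm_apply (z w : I) : (w : S) • f z = (z : S) • f w := by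
    rw [← map_smul, ← map_smul]
    exact congrArg f (Subtype.ext (mul_comm _ _))
  obtain ⟨m, hm⟩ := hxy _ _ (smul_comm_apply ⟨x, hxI⟩ ⟨y, hyI⟩)
  refine ⟨m, fun z => hx ?_, fun n hn => hx ?_⟩
  · calc x • f z = (z : S) • f ⟨x, hxI⟩ := smul_comm_apply z ⟨x, hxI⟩
      _ = x • (z : S) • m := by rw [hm, smul_comm]
  · exact (hn ⟨x, hxI⟩).symm.trans hm

theorem isWeaklyRegular_quotient_span_singleton {x y θ : S} (hx₀ : x ∈ nonZeroDivisors S)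
    (hx : (Ideal.span {x}).IsPrime) (hxy : (Ideal.span {x, y}).IsPrime)
    (hy : y ∉ Ideal.span {x}) (hθ : θ ∉ Ideal.span {x, y}) :
    RingTheory.Sequence.IsWeaklyRegular (S ⧸ Ideal.span {θ}) [x, y] := by
  have hθx : θ ∉ Ideal.span {x} := fun h => hθ (Ideal.span_mono (by simp) h)
  refine isWeaklyRegular_pair_iff.2 ⟨?_, fun m n hmn => ?_⟩
  · simp only [isSMulRegular_quotient_iff_mem_of_smul_mem, Ideal.mem_span_singleton, smul_eq_mul]
    rintro s ⟨t, ht⟩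
    obtain ⟨u, rfl⟩ := Ideal.mem_span_singleton.1
      ((hx.mem_or_mem (Ideal.mem_span_singleton.2 ⟨s, ht.symm⟩)).resolve_left hθx)
    exact ⟨u, (mul_cancel_left_mem_nonZeroDivisors hx₀).1 (by rw [ht, mul_left_comm])⟩
  · obtain ⟨m, rfl⟩ := Ideal.Quotient.mk_surjective m
    obtain ⟨n, rfl⟩ := Ideal.Quotient.mk_surjective n
    obtain ⟨b, hb⟩ : θ ∣ y * m - x * n :=
      Ideal.mem_span_singleton.1 (Ideal.Quotient.eq.1 hmn)
    obtain ⟨b₀, b₁, rfl⟩ := Ideal.mem_span_pair.1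
      ((hxy.mem_or_mem (Ideal.mem_span_pair.2 ⟨-n, m, by rw [← hb]; ring⟩)).resolve_left hθ)
    obtain ⟨k, hk⟩ := Ideal.mem_span_singleton.1
      ((hx.mem_or_mem (x := y) (y := m - θ * b₁) (Ideal.mem_span_singleton.2
        ⟨n + θ * b₀, by linear_combination hb⟩)).resolve_left hy)
    refine ⟨Ideal.Quotient.mk _ k, Ideal.Quotient.eq.2 (Ideal.mem_span_singleton.2 ⟨b₁, ?_⟩)⟩
    simp only [smul_eq_mul]
    linear_combination hk

end Closed

section Galois

open scoped TensorProduct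

variable {G S : Type*} [Group G] [CommRing S] [MulSemiringAction G S]

variable (G S) in
/-- The map `a ⊗ b ↦ (σ ↦ a * σ b)`, which for a Galois extension `S` of `S^G` identifies
`S ⊗[S^G] S` with `G → S`. -/
noncomputable def galoisMap : S ⊗[ℤ] S →ₐ[ℤ] (G → S) :=
  Algebra.TensorProduct.productMap (Pi.constAlgHom ℤ G S)
    (AlgHom.pi fun σ : G => MulSemiringAction.toAlgHom ℤ S σ)

variable (S) in
/-- The ideal of the fixed locus of `σ` in the spectrum of `S`; the union of these loci over
`σ ≠ 1` is where `S` ramifies over `S^G`. -/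
def fixedLocusIdeal (σ : G) : Ideal S :=
  Ideal.span (Set.range fun b : S => b - σ • b)

theorem galoisMap_tmul (a b : S) (σ : G) : galoisMap G S (a ⊗ₜ b) σ = a * σ • b := rfl

theorem galoisMap_map (ρ σ τ : G) (e : S ⊗[ℤ] S) :
    galoisMap G S (Algebra.TensorProduct.map (MulSemiringAction.toAlgHom ℤ S ρ)
      (MulSemiringAction.toAlgHom ℤ S σ) e) τ = ρ • galoisMap G S e (ρ⁻¹ * τ * σ) := by
  induction e with
  | zero => simp
  | tmul a b => simp [galoisMap_tmul, mul_smul]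
  | add e e' he he' => simp only [map_add, Pi.add_apply, he, he', smul_add]

variable (G S) in
/-- The Noether different of `S` over `S^G`: the values at `1` of those functions `G → S` in the
image of `galoisMap` that vanish away from `1`. It is the unit ideal when `S` is Galois over `S^G`;
tensors over `ℤ` suffice because `galoisMap` factors through `S ⊗[S^G] S`. -/
noncomputable def noetherDifferent : Ideal S where
  carrier := {z | ∃ e, galoisMap G S e 1 = z ∧ ∀ σ ≠ 1, galoisMap G S e σ = 0}
  zero_mem' := ⟨0, by simp, by simp⟩
  add_mem' := by
    rintro _ _ ⟨e, rfl, he⟩ ⟨e', rfl, he'⟩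
    exact ⟨e + e', by simp, fun σ hσ => by simp [he σ hσ, he' σ hσ]⟩
  smul_mem' := by
    rintro a _ ⟨e, rfl, he⟩
    exact ⟨a ⊗ₜ 1 * e, by simp [galoisMap_tmul], fun σ hσ => by simp [he σ hσ]⟩

theorem exists_galoisMap_of_mem_noetherDifferent {z : S} (hz : z ∈ noetherDifferent G S) (σ : G) :
    ∃ e, galoisMap G S e σ = z ∧ ∀ τ ≠ σ, galoisMap G S e τ = 0 := by
  obtain ⟨e, rfl, he⟩ := hz
  refine ⟨Algebra.TensorProduct.map (MulSemiringAction.toAlgHom ℤ S (1 : G))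
    (MulSemiringAction.toAlgHom ℤ S σ⁻¹) e, ?_, fun τ hτ => ?_⟩
  · simp [galoisMap_map]
  · rw [galoisMap_map, he _ (by simpa [mul_inv_eq_one] using hτ), smul_zero]

theorem smul_mem_noetherDifferent {z : S} (hz : z ∈ noetherDifferent G S) (σ : G) :
    σ • z ∈ noetherDifferent G S := by
  obtain ⟨e, rfl, he⟩ := hz
  refine ⟨Algebra.TensorProduct.map (MulSemiringAction.toAlgHom ℤ S σ)
    (MulSemiringAction.toAlgHom ℤ S σ) e, ?_, fun τ hτ => ?_⟩
  · simp [galoisMap_map]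
  · rw [galoisMap_map, he _ (by simpa [mul_assoc, inv_mul_eq_one] using hτ), smul_zero]

theorem exists_galoisMap_of_mem_fixedLocusIdeal {σ : G} {x : S} (hx : x ∈ fixedLocusIdeal S σ) :
    ∃ e, galoisMap G S e 1 = x ∧ galoisMap G S e σ = 0 := by
  induction hx using Submodule.span_induction with
  | mem _ h =>
    obtain ⟨b, rfl⟩ := h
    exact ⟨1 ⊗ₜ b - (σ • b) ⊗ₜ 1, by simp [galoisMap_tmul], by simp [galoisMap_tmul]⟩
  | zero => exact ⟨0, by simp, by simp⟩
  | add _ _ _ _ hx hy =>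
    obtain ⟨e, rfl, he⟩ := hx
    obtain ⟨e', rfl, he'⟩ := hy
    exact ⟨e + e', by simp, by simp [he, he']⟩
  | smul a _ _ hx =>
    obtain ⟨e, rfl, he⟩ := hx
    exact ⟨a ⊗ₜ 1 * e, by simp [galoisMap_tmul], by simp [he]⟩

theorem pow_mem_noetherDifferent [Fintype G] {x : S}
    (hx : ∀ σ : G, σ ≠ 1 → x ∈ fixedLocusIdeal S σ) :
    x ^ (Fintype.card G - 1) ∈ noetherDifferent G S := by
  classical
  choose! e he₁ heσ using fun σ hσ => exists_galoisMap_of_mem_fixedLocusIdeal (hx σ hσ)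
  refine ⟨∏ σ ∈ Finset.univ.erase 1, e σ, ?_, fun τ hτ => ?_⟩
  · rw [map_prod, Finset.prod_apply,
      Finset.prod_congr rfl fun σ hσ => he₁ σ (Finset.ne_of_mem_erase hσ),
      Finset.prod_const, Finset.card_erase_of_mem (Finset.mem_univ 1), Finset.card_univ]
  · rw [map_prod, Finset.prod_apply]
    exact Finset.prod_eq_zero (Finset.mem_erase.2 ⟨hτ, Finset.mem_univ τ⟩) (heσ τ hτ)

theorem sum_smul_mem_fixedSubring_s13 [Fintype G] (b : S) : ∑ τ : G, τ • b ∈ fixedSubring G S := by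
  intro σ
  simp only [Finset.smul_sum, smul_smul]
  exact Equiv.sum_comp (Equiv.mulLeft σ) (· • b)

end Galois

section TwistedSum

open scoped TensorProduct

variable {G S : Type*} [Group G] [CommRing S] [MulSemiringAction G S]
  {M : Type*} [AddCommGroup M] [Module S M]

theorem sum_galoisMap_smul_eq_zero [Fintype G] {c : G → M} (hc : ∀ t : S, ∑ τ, (τ • t) • c τ = 0)
    (e : S ⊗[ℤ] S) : ∑ τ, galoisMap G S e τ • c τ = 0 := by
  induction e with
  | zero => simp
  | tmul a b => simp only [galoisMap_tmul, mul_smul, ← Finset.smul_sum, hc, smul_zero]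
  | add e e' he he' =>
    simp only [map_add, Pi.add_apply, add_smul, Finset.sum_add_distrib, he, he', add_zero]

theorem eq_zero_of_sum_smul_eq_zero [Fintype G] (hM : IsClosedFor M (noetherDifferent G S))
    {c : G → M} (hc : ∀ t : S, ∑ τ, (τ • t) • c τ = 0) : c = 0 := by
  ext σ
  refine hM.eq_zero fun z hz => ?_
  obtain ⟨e, rfl, he⟩ := exists_galoisMap_of_mem_noetherDifferent hz σ
  rw [← sum_galoisMap_smul_eq_zero hc e,
    Finset.sum_eq_single σ (fun τ _ hτ => by rw [he τ hτ, zero_smul]) (by simp)]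

variable [Module (fixedSubring G S) M] [IsScalarTower (fixedSubring G S) S M]

theorem eq_zero_of_forall_mem_noetherDifferent [Finite G]
    (hM : IsClosedFor M (noetherDifferent G S))
    {ψ : S →ₗ[fixedSubring G S] M} (hψ : ∀ z ∈ noetherDifferent G S, ψ z = 0) : ψ = 0 := by
  cases nonempty_fintype G
  ext t
  refine hM.eq_zero fun z hz => ?_
  have h := eq_zero_of_sum_smul_eq_zero hM (c := fun τ : G => (τ • z) • ψ t) fun s => ?_
  · simpa using congrFun h 1
  let r : fixedSubring G S := ⟨∑ τ : G, τ • (s * z), sum_smul_mem_fixedSubring_s13 _⟩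
  have hr : (r : S) ∈ noetherDifferent G S := Ideal.sum_mem _ fun τ _ =>
    smul_mem_noetherDifferent (Ideal.mul_mem_left _ s hz) τ
  calc ∑ τ : G, (τ • s) • (τ • z) • ψ t = r • ψ t := by
        simp only [smul_smul, ← smul_mul', ← Finset.sum_smul, ← algebraMap_smul S r]
        rfl
    _ = ψ (r * t) := (map_smul ψ r t).symm
    _ = 0 := hψ _ (Ideal.mul_mem_right t _ hr)

variable [Fintype G]

theorem exists_map_sum_galoisMap (φ : S →ₗ[fixedSubring G S] M) (e : S ⊗[ℤ] S) :
    ∃ m : G → M, ∀ t, φ (∑ τ, galoisMap G S e τ * τ • t) = ∑ τ, (τ • t) • m τ := by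
  induction e with
  | zero => exact ⟨0, by simp⟩
  | tmul a b =>
    refine ⟨fun τ => (τ • b) • φ a, fun t => ?_⟩
    have trace_smul : ∑ τ : G, galoisMap G S (a ⊗ₜ b) τ * τ • t =
        (⟨∑ τ : G, τ • (t * b), sum_smul_mem_fixedSubring_s13 _⟩ : fixedSubring G S) • a := by
      simp only [galoisMap_tmul, Subring.smul_def, smul_eq_mul, Finset.sum_mul, smul_mul']
      exact Finset.sum_congr rfl fun τ _ => by ring
    rw [trace_smul, map_smul, ← algebraMap_smul S]
    simp only [smul_smul, ← smul_mul', ← Finset.sum_smul]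
    rfl
  | add e e' he he' =>
    obtain ⟨m, hm⟩ := he
    obtain ⟨m', hm'⟩ := he'
    exact ⟨m + m', fun t => by simp [add_mul, Finset.sum_add_distrib, hm, hm']⟩

theorem exists_map_mul_of_mem_noetherDifferent (φ : S →ₗ[fixedSubring G S] M) {z : S}
    (hz : z ∈ noetherDifferent G S) : ∃ m : G → M, ∀ t, φ (z * t) = ∑ τ, (τ • t) • m τ := by
  obtain ⟨e, rfl, he⟩ := hz
  refine (exists_map_sum_galoisMap φ e).imp fun m hm t => ?_
  rw [← hm t, Finset.sum_eq_single 1 (fun τ _ hτ => by rw [he τ hτ, zero_mul]) (by simp), one_smul]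

theorem exists_linearMap_map_mul_eq_sum_smul (hM : IsClosedFor M (noetherDifferent G S))
    (φ : S →ₗ[fixedSubring G S] M) :
    ∃ w : G → noetherDifferent G S →ₗ[S] M, ∀ (z : noetherDifferent G S) (t : S),
      φ (z * t) = ∑ τ, (τ • t) • w τ ⟨τ • z, smul_mem_noetherDifferent z.2 τ⟩ := by
  choose m hm using fun z : noetherDifferent G S => exists_map_mul_of_mem_noetherDifferent φ z.2
  have coeff_unique {c d : G → M} (h : ∀ t : S, ∑ τ, (τ • t) • c τ = ∑ τ, (τ • t) • d τ) :
      c = d :=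
    sub_eq_zero.1 <| eq_zero_of_sum_smul_eq_zero hM fun t => by
      simp only [Pi.sub_apply, smul_sub, Finset.sum_sub_distrib, h, sub_self]
  have m_add (z w) : m (z + w) = m z + m w := coeff_unique fun t => by
    simp only [← hm, Submodule.coe_add, add_mul, map_add, Pi.add_apply, smul_add,
      Finset.sum_add_distrib]
  have m_smul (s : S) (z) : m (s • z) = fun τ => (τ • s) • m z τ := coeff_unique fun t => by
    rw [← hm, Submodule.coe_smul, smul_eq_mul, mul_comm s, mul_assoc, hm]
    simp only [smul_mul', mul_smul]
    exact Finset.sum_congr rfl fun τ _ => smul_comm _ _ _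
  -- The coefficient of `τ` is `τ`-semilinear in `z`; precomposing with `τ⁻¹` makes it linear.
  let conj (σ : G) (z : noetherDifferent G S) : noetherDifferent G S :=
    ⟨σ • z, smul_mem_noetherDifferent z.2 σ⟩
  have conj_add (σ z w) : conj σ (z + w) = conj σ z + conj σ w := Subtype.ext (smul_add σ _ _)
  have conj_smul (σ s z) : conj σ (s • z) = (σ • s) • conj σ z := 
    Subtype.ext (smul_mul' σ s (z : S))
  have inv_conj (σ z) : conj σ⁻¹ (conj σ z) = z := Subtype.ext (inv_smul_smul σ _)
  refine ⟨fun σ =>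
    { toFun z := m (conj σ⁻¹ z) σ
      map_add' z w := by rw [conj_add, m_add, Pi.add_apply]
      map_smul' s z := by simp only [conj_smul, m_smul, smul_inv_smul, RingHom.id_apply] },
    fun z t => ?_⟩
  exact (hm z t).trans (Finset.sum_congr rfl fun τ _ => congrArg (fun z => (τ • t) • m z τ)
    (inv_conj τ z).symm)

variable (G S M) in
/-- The `S^G`-linear map `t ↦ ∑ τ, τ t • u τ` given by an element `∑ τ, u τ * τ` of the skew group
module `M * G`. -/
def twistedSum (u : G → M) : S →ₗ[fixedSubring G S] M where
  toFun t := ∑ τ, (τ • t) • u τ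
  map_add' s t := by simp only [smul_add, add_smul, Finset.sum_add_distrib]
  map_smul' r t := by
    rw [RingHom.id_apply, Finset.smul_sum]
    refine Finset.sum_congr rfl fun τ _ => ?_
    rw [Subring.smul_def, smul_eq_mul, smul_mul', r.2 τ, mul_smul, ← algebraMap_smul S r]
    rfl

theorem exists_map_eq_twistedSum (hM : IsClosedFor M (noetherDifferent G S))
    (φ : S →ₗ[fixedSubring G S] M) :
    ∃ u : G → M, ∀ z ∈ noetherDifferent G S, φ z = twistedSum G S M u z := by
  obtain ⟨w, hw⟩ := exists_linearMap_map_mul_eq_sum_smul hM φ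
  choose u hu using fun σ => (hM (w σ)).exists
  refine ⟨u, fun z hz => ?_⟩
  simpa [hu, twistedSum] using hw ⟨z, hz⟩ 1

theorem exists_eq_twistedSum (hM : IsClosedFor M (noetherDifferent G S))
    (φ : S →ₗ[fixedSubring G S] M) : ∃ u : G → M, φ = twistedSum G S M u := by
  obtain ⟨u, hu⟩ := exists_map_eq_twistedSum hM φ
  refine ⟨u, sub_eq_zero.1 <| eq_zero_of_forall_mem_noetherDifferent hM fun z hz => ?_⟩
  rw [LinearMap.sub_apply, hu z hz, sub_self]

end TwistedSum

section Lifting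

variable {A : Type*} [CommRing A]

/-- Every `A`-linear map from `L₁` to `L₂ ⧸ I L₂` lifts to a map `L₁ → L₂`. -/
def HomLiftsModulo (I : Ideal A) (L₁ L₂ : Type*) [AddCommGroup L₁] [Module A L₁]
    [AddCommGroup L₂] [Module A L₂] : Prop :=
  ∀ φ : L₁ →ₗ[A] L₂ ⧸ (I • ⊤ : Submodule A L₂),
    ∃ f : L₁ →ₗ[A] L₂, ∀ x, φ x = Submodule.Quotient.mk (f x)

variable {L₁ L₂ : Type*} [AddCommGroup L₁] [Module A L₁] [AddCommGroup L₂] [Module A L₂]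

theorem mem_span_singleton_smul_top_iff {θ : A} {x : L₁} :
    x ∈ (Ideal.span {θ} • ⊤ : Submodule A L₁) ↔ ∃ y, x = θ • y := by
  simp only [Submodule.ideal_span_singleton_smul, Submodule.mem_smul_pointwise_iff_exists,
    Submodule.mem_top, true_and, eq_comm]

theorem exists_eq_smul_of_forall_exists_apply_eq_smul {θ : A} (hθ : IsSMulRegular L₂ θ)
    {f : L₁ →ₗ[A] L₂} (hf : ∀ x, ∃ y, f x = θ • y) : ∃ g : L₁ →ₗ[A] L₂, f = θ • g := by
  let divide : LinearMap.range (LinearMap.lsmul A L₂ θ) →ₗ[A] L₂ :=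
    (LinearEquiv.ofInjective (LinearMap.lsmul A L₂ θ) hθ).symm
  refine ⟨divide ∘ₗ f.codRestrict _ fun x => (hf x).imp fun _ => Eq.symm, ?_⟩
  ext x
  exact congrArg Subtype.val
    ((LinearEquiv.ofInjective (LinearMap.lsmul A L₂ θ) hθ).apply_symm_apply ⟨f x, _⟩).symm

theorem forall_mk_eq_zero_iff_mem_span_singleton_smul_top {θ : A} (hθ : IsSMulRegular L₂ θ)
    (f : L₁ →ₗ[A] L₂) :
    (∀ x, (Submodule.Quotient.mk (f x) : L₂ ⧸ (Ideal.span {θ} • ⊤ : Submodule A L₂)) = 0) ↔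
      f ∈ (Ideal.span {θ} • ⊤ : Submodule A (L₁ →ₗ[A] L₂)) := by
  simp only [Submodule.Quotient.mk_eq_zero, mem_span_singleton_smul_top_iff]
  refine ⟨exists_eq_smul_of_forall_exists_apply_eq_smul hθ, ?_⟩
  rintro ⟨g, rfl⟩ x
  exact ⟨g x, rfl⟩

variable {S : Type*} [AddCommGroup S] [Module A S]

theorem MemAdd.exists_sum_apply_eq (h : MemAdd A S L₁) :
    ∃ (n : ℕ) (i : Fin n → L₁ →ₗ[A] S) (p : Fin n → S →ₗ[A] L₁), ∀ x, ∑ k, p k (i k x) = x := by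
  obtain ⟨n, N, N', hN, ⟨e⟩⟩ := h
  refine ⟨n, fun k => LinearMap.proj k ∘ₗ N.subtype ∘ₗ e,
    fun k => e.symm ∘ₗ N.projectionOnto N' hN ∘ₗ LinearMap.single A (fun _ => S) k, fun x => ?_⟩
  simp only [LinearMap.comp_apply, ← map_sum, LinearMap.proj_apply, LinearMap.single_apply,
    Finset.univ_sum_single, LinearEquiv.coe_coe, Submodule.subtype_apply,
    Submodule.projectionOnto_apply_left, LinearEquiv.symm_apply_apply]

theorem MemAdd.isSMulRegular (h : MemAdd A S L₁) {θ : A} (hθ : IsSMulRegular S θ) :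
    IsSMulRegular L₁ θ := by
  obtain ⟨n, i, p, hip⟩ := h.exists_sum_apply_eq
  intro x y hxy
  have hi (k) : i k x = i k y := hθ (by simpa only [map_smul] using congrArg (i k) hxy)
  rw [← hip x, ← hip y]
  simp only [hi]

theorem MemAdd.homLiftsModulo_left {I : Ideal A} (h₁ : MemAdd A S L₁)
    (hS : HomLiftsModulo I S L₂) : HomLiftsModulo I L₁ L₂ := by
  intro φ
  obtain ⟨n, i, p, hip⟩ := h₁.exists_sum_apply_eq
  choose f hf using fun k => hS (φ ∘ₗ p k)
  refine ⟨∑ k, f k ∘ₗ i k, fun x => ?_⟩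
  calc φ x = ∑ k, (φ ∘ₗ p k) (i k x) := by
        simp only [LinearMap.comp_apply, ← map_sum, hip]
    _ = Submodule.Quotient.mk ((∑ k, f k ∘ₗ i k) x) := by
        simp only [hf, LinearMap.sum_apply, LinearMap.comp_apply, ← Submodule.mkQ_apply, map_sum]

theorem MemAdd.homLiftsModulo_right {I : Ideal A} (h₂ : MemAdd A S L₂)
    (hS : HomLiftsModulo I L₁ S) : HomLiftsModulo I L₁ L₂ := by
  intro φ
  obtain ⟨n, i, p, hip⟩ := h₂.exists_sum_apply_eq
  choose f hf using fun k => hS ((LinearMap.reduceModIdeal I (i k)).restrictScalars A ∘ₗ φ)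
  refine ⟨∑ k, p k ∘ₗ f k, fun x => ?_⟩
  obtain ⟨y, hy⟩ := Submodule.mkQ_surjective _ (φ x)
  have mk_f (k) : Submodule.mkQ (I • ⊤ : Submodule A S) (f k x) =
      Submodule.mkQ (I • ⊤ : Submodule A S) (i k y) := by
    rw [Submodule.mkQ_apply, ← hf, LinearMap.comp_apply, ← hy]
    rfl
  calc φ x = Submodule.mkQ (I • ⊤ : Submodule A L₂) (∑ k, p k (i k y)) := by rw [hip, hy]
    _ = ∑ k, LinearMap.reduceModIdeal I (p k) (Submodule.mkQ (I • ⊤ : Submodule A S) (i k y)) :=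
        map_sum _ _ _
    _ = ∑ k, LinearMap.reduceModIdeal I (p k) (Submodule.mkQ (I • ⊤ : Submodule A S) (f k x)) := by
        simp only [mk_f]
    _ = Submodule.mkQ (I • ⊤ : Submodule A L₂) ((∑ k, p k ∘ₗ f k) x) := by
        rw [LinearMap.sum_apply, map_sum]
        rfl

end Lifting

section Invariants

variable {G S : Type*} [Group G] [Finite G] [CommRing S] [MulSemiringAction G S]

theorem homLiftsModulo_of_isClosedFor {I : Ideal (fixedSubring G S)}
    (hI : IsClosedFor (S ⧸ I.map (algebraMap (fixedSubring G S) S)) (noetherDifferent G S)) :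
    HomLiftsModulo I S S := by
  cases nonempty_fintype G
  let e : (S ⧸ (I • ⊤ : Submodule (fixedSubring G S) S)) ≃ₗ[fixedSubring G S]
      S ⧸ I.map (algebraMap (fixedSubring G S) S) :=
    Submodule.quotEquivOfEq _ _ (Ideal.smul_top_eq_map I) ≪≫ₗ
      Submodule.Quotient.restrictScalarsEquiv _ _
  intro φ
  obtain ⟨u, hu⟩ := exists_eq_twistedSum hI (e.toLinearMap ∘ₗ φ)
  choose v hv using fun τ => Ideal.Quotient.mk_surjective (u τ)
  refine ⟨twistedSum G S S v, fun t => e.injective ?_⟩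
  calc e (φ t) = ∑ τ : G, (τ • t) • Ideal.Quotient.mk _ (v τ) := by
        simp only [hv]
        exact LinearMap.congr_fun hu t
    _ = e (Submodule.Quotient.mk (twistedSum G S S v t)) :=
        (map_sum (Ideal.Quotient.mk _) _ _).symm

end Invariants

section PowerSeries

variable {ι V : Type*} [CommRing V]

theorem mem_span_X_image_of_coeff_eq_zero {s : Finset ι} {f : MvPowerSeries ι V}
    (hf : ∀ m : ι →₀ ℕ, (∀ i ∈ s, m i = 0) → coeff m f = 0) :
    f ∈ Ideal.span ((X : ι → MvPowerSeries ι V) '' s) := by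
  classical
  induction s using Finset.induction_on generalizing f with
  | empty =>
    rw [show f = 0 from MvPowerSeries.ext fun m => hf m (by simp)]
    exact Ideal.zero_mem _
  | insert a s _ ih =>
    let f₀ : MvPowerSeries ι V := fun m => if m a = 0 then 0 else coeff m f
    have coeff_f₀ (m) : coeff m f₀ = if m a = 0 then 0 else coeff m f := rfl
    have X_dvd : (X a : MvPowerSeries ι V) ∣ f₀ :=
      X_dvd_iff.2 fun m hm => by rw [coeff_f₀, if_pos hm]
    have sub_mem : f - f₀ ∈ Ideal.span ((X : ι → MvPowerSeries ι V) '' s) := ih fun m hm => by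
      rw [map_sub, coeff_f₀]
      split_ifs with ha
      · rw [sub_zero, hf m (Finset.forall_mem_insert _ _ _ |>.2 ⟨ha, hm⟩)]
      · exact sub_self _
    rw [Finset.coe_insert, Set.image_insert_eq, Ideal.span_insert, ← add_sub_cancel f₀ f]
    exact Submodule.add_mem_sup (Ideal.mem_span_singleton.2 X_dvd) sub_mem

theorem span_X_image_eq_ker_killCompl (s : Finset ι) :
    Ideal.span ((X : ι → MvPowerSeries ι V) '' s) =
      RingHom.ker (killCompl (R := V) (Function.Embedding.subtype (· ∉ s))) := by
  refine le_antisymm (Ideal.span_le.2 ?_) fun f hf => mem_span_X_image_of_coeff_eq_zero ?_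
  · rintro _ ⟨i, hi, rfl⟩
    exact killCompl_X_eq_zero (by simpa using hi)
  · intro m hm
    obtain ⟨x, rfl⟩ := (Finsupp.mem_range_embDomain_iff (Function.Embedding.subtype (· ∉ s)) m).2
      fun i hi => by simpa using fun his => Finsupp.mem_support_iff.1 hi (hm i his)
    rw [← coeff_killCompl, RingHom.mem_ker.1 hf, map_zero]

theorem isPrime_span_X_image [IsDomain V] (s : Finset ι) :
    (Ideal.span ((X : ι → MvPowerSeries ι V) '' s)).IsPrime := by
  have : IsDomain (MvPowerSeries {i // i ∉ s} V) := NoZeroDivisors.to_isDomain _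
  rw [span_X_image_eq_ker_killCompl]
  exact RingHom.ker_isPrime _

theorem constantCoeff_eq_zero_of_mem_span_X_image {s : Set ι} {f : MvPowerSeries ι V}
    (hf : f ∈ Ideal.span ((X : ι → MvPowerSeries ι V) '' s)) : constantCoeff f = 0 := by
  refine (Ideal.span_le (I := RingHom.ker constantCoeff)).2 ?_ hf
  rintro _ ⟨i, -, rfl⟩
  exact constantCoeff_X i

theorem X_notMem_span_X_image [Nontrivial V] {i : ι} {s : Finset ι} (hi : i ∉ s) :
    (X i : MvPowerSeries ι V) ∉ Ideal.span ((X : ι → MvPowerSeries ι V) '' s) := by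
  intro h
  rw [span_X_image_eq_ker_killCompl] at h
  have X_eq_zero : (X ⟨i, hi⟩ : MvPowerSeries {i // i ∉ s} V) = 0 := (killCompl_X _).symm.trans h
  simpa using congrArg (coeff (Finsupp.single ⟨i, hi⟩ 1)) X_eq_zero

theorem isWeaklyRegular_quotient_span_X_pair [IsDomain V] {i j : ι} (hij : i ≠ j)
    {θ : MvPowerSeries ι V} (hθ : constantCoeff θ ≠ 0) :
    RingTheory.Sequence.IsWeaklyRegular (MvPowerSeries ι V ⧸ Ideal.span {θ})
      [(X i : MvPowerSeries ι V), X j] := by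
  classical
  have : IsDomain (MvPowerSeries ι V) := NoZeroDivisors.to_isDomain _
  have image_singleton : (X : ι → MvPowerSeries ι V) '' ({i} : Finset ι) = {X i} := by simp
  have image_pair : (X : ι → MvPowerSeries ι V) '' ({i, j} : Finset ι) = {X i, X j} := by
    simp [Set.image_insert_eq]
  have X_ne_zero : (X i : MvPowerSeries ι V) ≠ 0 := by
    simpa using X_notMem_span_X_image (V := V) (Finset.notMem_empty i)
  apply isWeaklyRegular_quotient_span_singleton (mem_nonZeroDivisors_of_ne_zero X_ne_zero)
  · exact image_singleton ▸ isPrime_span_X_image {i}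
  · exact image_pair ▸ isPrime_span_X_image {i, j}
  · exact image_singleton ▸ X_notMem_span_X_image (by simpa using hij.symm)
  · exact image_pair ▸ fun h => hθ (constantCoeff_eq_zero_of_mem_span_X_image h)

theorem X_mem_fixedLocusIdeal [Fintype ι] [DecidableEq ι] {G : Type*} [Group G]
    [MulSemiringAction G (MvPowerSeries ι V)] {σ : G} {A : Matrix ι ι V}
    (hσ : ∀ i, σ • (X i : MvPowerSeries ι V) = ∑ j, C (A j i) * X j) (hA : IsUnit (A - 1).det)
    (k : ι) : (X k : MvPowerSeries ι V) ∈ fixedLocusIdeal (MvPowerSeries ι V) σ := by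
  let D : Matrix ι ι (MvPowerSeries ι V) := C.mapMatrix (A - 1)
  have vecMul_D (i) : Matrix.vecMul X D i = σ • (X i : MvPowerSeries ι V) - X i := by
    simp [D, hσ, Matrix.vecMul, dotProduct, Matrix.one_apply, mul_sub, Finset.sum_sub_distrib,
      mul_comm]
  have hD : IsUnit D.det := by
    rw [← RingHom.map_det]
    exact hA.map C
  have X_eq : (X : ι → MvPowerSeries ι V) = Matrix.vecMul (Matrix.vecMul X D) D⁻¹ := by
    rw [Matrix.vecMul_vecMul, Matrix.mul_nonsing_inv D hD, Matrix.vecMul_one]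
  rw [X_eq]
  refine Ideal.sum_mem _ fun i _ => Ideal.mul_mem_right _ _ ?_
  rw [vecMul_D, ← neg_sub, Ideal.neg_mem_iff]
  exact Ideal.subset_span ⟨X i, rfl⟩

end PowerSeries

section Matrix

theorem isUnit_of_card_le_rank {ι k : Type*} [Fintype ι] [DecidableEq ι] [Field k]
    {M : Matrix ι ι k} (hM : Fintype.card ι ≤ M.rank) : IsUnit M := by
  rw [← Matrix.linearIndependent_cols_iff_isUnit, linearIndependent_iff_card_le_finrank_span]
  rwa [Matrix.rank_eq_finrank_span_cols] at hM

theorem isUnit_det_sub_one_of_card_le_rank_map_residue {ι V : Type*} [Fintype ι] [DecidableEq ι]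
    [CommRing V] [IsLocalRing V] {M : Matrix ι ι V}
    (hM : Fintype.card ι ≤ (M.map (residue V) - 1).rank) : IsUnit (M - 1).det := by
  rw [← residue_ne_zero_iff_isUnit, RingHom.map_det, map_sub, map_one]
  exact ((Matrix.isUnit_iff_isUnit_det _).1 (isUnit_of_card_le_rank hM)).ne_zero

end Matrix

theorem isClosedFor_quotient_span_of_constantCoeff_ne_zero {ι V : Type*} [Fintype ι]
    [Nontrivial ι] [DecidableEq ι] [CommRing V] [IsDomain V] {G : Type*} [Group G] [Finite G]
    [MulSemiringAction G (MvPowerSeries ι V)] {A : G → Matrix ι ι V}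
    (hA : ∀ σ i, σ • (X i : MvPowerSeries ι V) = ∑ j, C (A σ j i) * X j)
    (hfree : ∀ σ ≠ 1, IsUnit (A σ - 1).det) {θ : MvPowerSeries ι V} (hθ : constantCoeff θ ≠ 0) :
    IsClosedFor (MvPowerSeries ι V ⧸ Ideal.span {θ}) (noetherDifferent G (MvPowerSeries ι V)) := by
  cases nonempty_fintype G
  obtain ⟨i, j, hij⟩ := exists_pair_ne ι
  have X_pow_mem (k : ι) := pow_mem_noetherDifferent (G := G) fun σ hσ =>
    X_mem_fixedLocusIdeal (hA σ) (hfree σ hσ) k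
  exact isClosedFor_of_isWeaklyRegular (X_pow_mem i) (X_pow_mem j)
    (isWeaklyRegular_pow_pair (isWeaklyRegular_quotient_span_X_pair hij hθ) _ _)

theorem hom_mod_theta_general {ι V : Type*} [Fintype ι] [Nontrivial ι] [DecidableEq ι] [CommRing V]
    [IsDomain V] {G : Type*} [Group G] [Finite G] [MulSemiringAction G (MvPowerSeries ι V)]
    {A : G → Matrix ι ι V}
    (hA : ∀ σ i, σ • (X i : MvPowerSeries ι V) = ∑ j, C (A σ j i) * X j)
    (hfree : ∀ σ ≠ 1, IsUnit (A σ - 1).det)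
    {θ : fixedSubring G (MvPowerSeries ι V)} (hθ : constantCoeff (θ : MvPowerSeries ι V) ≠ 0)
    {L₁ L₂ : Type*} [AddCommGroup L₁] [AddCommGroup L₂]
    [Module (fixedSubring G (MvPowerSeries ι V)) L₁]
    [Module (fixedSubring G (MvPowerSeries ι V)) L₂]
    (h₁ : MemAdd (fixedSubring G (MvPowerSeries ι V)) (MvPowerSeries ι V) L₁)
    (h₂ : MemAdd (fixedSubring G (MvPowerSeries ι V)) (MvPowerSeries ι V) L₂) :
    (∀ φ : (L₁ ⧸ (Ideal.span {θ} • ⊤ : Submodule (fixedSubring G (MvPowerSeries ι V)) L₁))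
        →ₗ[fixedSubring G (MvPowerSeries ι V)]
        (L₂ ⧸ (Ideal.span {θ} • ⊤ : Submodule (fixedSubring G (MvPowerSeries ι V)) L₂)),
      ∃ f : L₁ →ₗ[fixedSubring G (MvPowerSeries ι V)] L₂,
        ∀ x : L₁, φ (Submodule.Quotient.mk x) = Submodule.Quotient.mk (f x)) ∧
    (∀ f : L₁ →ₗ[fixedSubring G (MvPowerSeries ι V)] L₂,
      (∀ x : L₁, (Submodule.Quotient.mk (f x) :
          L₂ ⧸ (Ideal.span {θ} • ⊤ : Submodule (fixedSubring G (MvPowerSeries ι V)) L₂)) = 0)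
        ↔ f ∈ (Ideal.span {θ} • ⊤ :
            Submodule (fixedSubring G (MvPowerSeries ι V))
              (L₁ →ₗ[fixedSubring G (MvPowerSeries ι V)] L₂))) := by
  have : IsDomain (MvPowerSeries ι V) := NoZeroDivisors.to_isDomain _
  have closed := isClosedFor_quotient_span_of_constantCoeff_ne_zero hA hfree hθ
  have lifts : HomLiftsModulo (Ideal.span {θ}) L₁ L₂ :=
    h₁.homLiftsModulo_left <| h₂.homLiftsModulo_right <| homLiftsModulo_of_isClosedFor <| by
      rwa [Ideal.map_span, Set.image_singleton]
  have θ_ne_zero : (θ : MvPowerSeries ι V) ≠ 0 := fun h => hθ (by rw [h, map_zero])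
  have regular : IsSMulRegular L₂ θ := h₂.isSMulRegular (mul_right_injective₀ θ_ne_zero)
  exact ⟨fun φ => lifts (φ ∘ₗ Submodule.mkQ _),
    forall_mk_eq_zero_iff_mem_span_singleton_smul_top regular⟩

/-- With `S = V[[x₁,x₂]]`, `G ⊆ GL₂(V)` finite without pseudo-reflections, `p ∤ |G|`,
let `θ = π − g ∈ S^G` where `g ∈ (x₁,x₂)² ∩ S^G`, and set `B = S^G/(θ)`.  Then for
`L₁, L₂ ∈ add_{S^G}(S)`, `Hom_B(L₁/θL₁, L₂/θL₂) ≅ Hom_{S^G}(L₁,L₂)/θ·Hom_{S^G}(L₁,L₂)`: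
every homomorphism of the quotient modules lifts, and a homomorphism induces `0` on
the quotients iff it lies in `θ·Hom_{S^G}(L₁,L₂)`. -/
theorem hom_mod_theta
    (V : Type) [CommRing V] [IsDomain V] [IsDiscreteValuationRing V] [CharZero V]
    [IsAdicComplete (maximalIdeal V) V]
    (p : ℕ) (hp : p.Prime)
    [CharP (ResidueField V) p] [IsAlgClosed (ResidueField V)]
    (G : Subgroup (GL (Fin 2) V)) [Finite G] (hG : ¬ (p ∣ Nat.card G))
    [MulSemiringAction G (MvPowerSeries (Fin 2) V)]
    (hlin : ∀ (σ : G) (i : Fin 2),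
      σ • (X i : MvPowerSeries (Fin 2) V) =
        ∑ j : Fin 2, C (σ := Fin 2) (R := V) (((σ : GL (Fin 2) V) : Matrix (Fin 2) (Fin 2) V) j i) * X j)
    (hconst : ∀ (σ : G) (v : V),
      σ • (C (σ := Fin 2) (R := V) v) = C (σ := Fin 2) (R := V) v)
    (hpr : ∀ σ : G, σ ≠ 1 →
      ¬ Matrix.rank
          ((((σ : GL (Fin 2) V) : Matrix (Fin 2) (Fin 2) V)).map (residue V) - 1) ≤ 1)
    (π : V) (hπ : maximalIdeal V = Ideal.span {π})
    (g : MvPowerSeries (Fin 2) V)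
    (hg : g ∈ (Ideal.span {(X 0 : MvPowerSeries (Fin 2) V), X 1}) ^ 2)
    (θ : fixedSubring G (MvPowerSeries (Fin 2) V))
    (hθ : (θ : MvPowerSeries (Fin 2) V) = C (σ := Fin 2) (R := V) π - g)
    (L₁ L₂ : Type) [AddCommGroup L₁] [AddCommGroup L₂]
    [Module (fixedSubring G (MvPowerSeries (Fin 2) V)) L₁]
    [Module (fixedSubring G (MvPowerSeries (Fin 2) V)) L₂]
    [Module.Finite (fixedSubring G (MvPowerSeries (Fin 2) V)) L₁]
    [Module.Finite (fixedSubring G (MvPowerSeries (Fin 2) V)) L₂]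
    (h₁ : MemAdd (fixedSubring G (MvPowerSeries (Fin 2) V)) (MvPowerSeries (Fin 2) V) L₁)
    (h₂ : MemAdd (fixedSubring G (MvPowerSeries (Fin 2) V)) (MvPowerSeries (Fin 2) V) L₂) :
    (∀ φ : (L₁ ⧸ (Ideal.span {θ} • ⊤ : Submodule (fixedSubring G (MvPowerSeries (Fin 2) V)) L₁))
        →ₗ[fixedSubring G (MvPowerSeries (Fin 2) V)]
        (L₂ ⧸ (Ideal.span {θ} • ⊤ : Submodule (fixedSubring G (MvPowerSeries (Fin 2) V)) L₂)),
      ∃ f : L₁ →ₗ[fixedSubring G (MvPowerSeries (Fin 2) V)] L₂,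
        ∀ x : L₁, φ (Submodule.Quotient.mk x) = Submodule.Quotient.mk (f x)) ∧
    (∀ f : L₁ →ₗ[fixedSubring G (MvPowerSeries (Fin 2) V)] L₂,
      (∀ x : L₁, (Submodule.Quotient.mk (f x) :
          L₂ ⧸ (Ideal.span {θ} • ⊤ : Submodule (fixedSubring G (MvPowerSeries (Fin 2) V)) L₂)) = 0)
        ↔ f ∈ (Ideal.span {θ} • ⊤ :
            Submodule (fixedSubring G (MvPowerSeries (Fin 2) V))
              (L₁ →ₗ[fixedSubring G (MvPowerSeries (Fin 2) V)] L₂))) := by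
  have constantCoeff_g : constantCoeff g = 0 := constantCoeff_eq_zero_of_mem_span_X_image
    (Set.image_pair (X (R := V)) (0 : Fin 2) 1 ▸ Ideal.pow_le_self two_ne_zero hg)
  have constantCoeff_θ : constantCoeff (θ : MvPowerSeries (Fin 2) V) = π := by
    rw [hθ, map_sub, constantCoeff_C, constantCoeff_g, sub_zero]
  have π_ne_zero : π ≠ 0 := by
    rintro rfl
    exact IsDiscreteValuationRing.not_a_field V (hπ.trans Ideal.span_singleton_zero)
  exact hom_mod_theta_general hlin
    (fun σ hσ => isUnit_det_sub_one_of_card_le_rank_map_residue (not_le.1 (hpr σ hσ)))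
    (constantCoeff_θ ▸ π_ne_zero) h₁ h₂
end
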